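/- (Primitive Normal Basis Theorem) Let F ⊆ K be finite fields with q = |F| and n = [K : F]. Then K has a primitive normal basis over F: there exists η ∈ K, η ≠ 0, such that η generates the multiplicative group Kˣ (equivalently, the multiplicative order of η is qⁿ − 1) and the conjugates η, η^q, …, η^{q^{n−1}} form an F-basis of K. -/

import Mathlib

/-!
Let `q = |F|` and `n = [K : F]`. With `X` acting as the Frobenius, `K` is a module over `F[X]`, and by the
normal basis theorem it is cyclic with annihilator generated by `X ^ n - 1`. Hence an element is normal
if and only if it lies outside `P(Frob) K`, a subgroup of index `q ^ deg P`, for each irreducible factor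
`P` of `X ^ n - 1`. Similarly, a unit is primitive if and only if it is not an `l`-th power for each
prime `l ∣ q ^ n - 1`. Moreover, normality of `w` is preserved under multiplication by any `γ` with
`γ ^ ((q - 1) * gcd (n, q - 1)) = 1`, because then `γ ^ (q - 1)` lies in `F`; so it is enough to consider
the primes `l` dividing `Q = (q ^ n - 1) / ((q - 1) * gcd (n, q - 1))` (`Good.of_unit`).

The theorem thus asks for a unit avoiding finitely many subgroups of `Kˣ` and of `K`. Their indicator
functions are combinations of multiplicative and of additive characters, and the resulting mixed
sums are Gauss sums of absolute value `√(q ^ n)`. If `ω` and `w` denote the number of primes dividing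
`Q` and of irreducible factors of `X ^ n - 1`, this gives the criterion
`(2 ^ ω - 1) ^ 2 * (2 ^ w - 1) ^ 2 < q ^ n` (`Good.of_card`), and a refinement in which only some of the
subgroups are treated exactly and the others are sieved (`sieve`, `Good.of_sieve`).

For `w`, the number of factors of degree `d` is determined by the numbers `gcd (n0, q ^ e - 1)` with
`e ∣ d`, where `n0` is the part of `n` prime to the characteristic, and the factors of larger degree are
controlled by the total degree `n0` (`Nd_rel`, `card_pset_bound`). With an elementary bound for `ω`, the
criterion holds for `n ≥ 3` as soon as `q ≥ 32` (`Good.of_large_card`) or `n ≥ 100`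
(`Good.of_large_degree`). In the remaining finite range it holds, by a computation with explicit upper
bounds for `ω` and `w` (`caseTest_all`), except for eight pairs `(q, n)`. The sieve handles seven of them,
and an explicit element the last one, `(3, 4)`. Degree `1` follows from the criterion, and in degree `2`
every primitive element is normal.
-/

namespace PNB
open Finset Polynomial

/-! ### Functions on finite abelian groups with controlled character expansions -/

open scoped Classical in
/-- `f` is a combination `∑ c_ψ ψ` of characters of `G` trivial on `V`, with constant coefficient
`c_1 = a` and with `∑ ‖c_ψ‖ ≤ T`. Only these data enter the estimates for character sums. -/
def Rep {G : Type*} [AddCommGroup G] [Finite G] (V : AddSubgroup G) (f : G → ℂ) (a T : ℝ) : Prop :=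
  ∃ c : AddChar G ℂ → ℂ, (∀ ψ, c ψ ≠ 0 → ∀ x ∈ V, ψ x = 1) ∧ c 1 = a ∧ ∑ ψ, ‖c ψ‖ ≤ T ∧
    ∀ x, f x = ∑ ψ, c ψ * ψ x

section
variable {G : Type*} [AddCommGroup G] [Finite G] {V V' W : AddSubgroup G} {f g : G → ℂ}
  {a a' T T' : ℝ}

open scoped Classical in
lemma Rep.one : Rep V (fun _ => 1) 1 1 := by
  refine ⟨Pi.single 1 1, ?_, by simp, ?_, ?_⟩
  · intro ψ h
    have : ψ = 1 := by
      by_contra h'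
      exact h (by simp [h'])
    simp [this]
  · rw [Finset.sum_eq_single 1] <;> simp +contextual
  · intro x
    rw [Finset.sum_eq_single 1] <;> simp +contextual

lemma Rep.mono (h : Rep V f a T) (hW : W ≤ V) : Rep W f a T := by
  obtain ⟨c, h1, h2⟩ := h
  exact ⟨c, fun ψ hψ x hx => h1 ψ hψ x (hW hx), h2⟩

open scoped Classical in
/-- When `V ⊔ V' = ⊤`, a character trivial on `V` and one trivial on `V'` are inverse to each other only if
both are trivial, so that the constant coefficient is multiplicative. -/
lemma Rep.mul (h : Rep V f a T) (h' : Rep V' g a' T') (hV : V ⊔ V' = ⊤) (hW : W ≤ V)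
    (hW' : W ≤ V') : Rep W (fun x => f x * g x) (a * a') (T * T') := by
  obtain ⟨c, h1, h2, h3, h4⟩ := h
  obtain ⟨c', h1', h2', h3', h4'⟩ := h'
  have key : ∀ F : AddChar G ℂ → ℂ,
      ∑ ψ, (∑ φ, c φ * c' (φ⁻¹ * ψ)) * F ψ = ∑ φ, ∑ ψ, c φ * c' ψ * F (φ * ψ) := by
    intro F
    simp_rw [Finset.sum_mul]
    rw [Finset.sum_comm]
    refine Finset.sum_congr rfl fun φ _ => ?_
    refine Fintype.sum_equiv (Equiv.mulLeft φ⁻¹) _ _ fun ψ => ?_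
    simp
  refine ⟨fun ψ => ∑ φ, c φ * c' (φ⁻¹ * ψ), ?_, ?_, ?_, ?_⟩
  · intro ψ hψ x hx
    obtain ⟨φ, -, hφ⟩ := Finset.exists_ne_zero_of_sum_ne_zero hψ
    have e1 := h1 φ (left_ne_zero_of_mul hφ) x (hW hx)
    have e2 := h1' _ (right_ne_zero_of_mul hφ) x (hW' hx)
    have : ψ = φ * (φ⁻¹ * ψ) := by group
    rw [this, AddChar.mul_apply, e1, e2, one_mul]
  · change ∑ φ, c φ * c' (φ⁻¹ * 1) = _
    rw [Finset.sum_eq_single 1]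
    · simp [h2, h2']
    · intro φ _ hφ
      by_contra hne
      have e1 := h1 φ (left_ne_zero_of_mul hne)
      have e2 := h1' _ (right_ne_zero_of_mul hne)
      apply hφ
      ext x
      obtain ⟨y, hy, z, hz, rfl⟩ := AddSubgroup.mem_sup.1 (hV ▸ AddSubgroup.mem_top x)
      have e3 := e2 (-z) (V'.neg_mem hz)
      rw [mul_one, AddChar.inv_apply, neg_neg] at e3
      rw [AddChar.map_add_eq_mul, e1 y hy, e3]
      simp
    · simp
  · calc ∑ ψ, ‖∑ φ, c φ * c' (φ⁻¹ * ψ)‖ ≤ ∑ ψ, ∑ φ, ‖c φ‖ * ‖c' (φ⁻¹ * ψ)‖ := by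
          refine Finset.sum_le_sum fun ψ _ => (norm_sum_le _ _).trans_eq ?_
          simp
      _ = ∑ φ, ‖c φ‖ * ∑ ψ, ‖c' ψ‖ := by
          rw [Finset.sum_comm]
          refine Finset.sum_congr rfl fun φ _ => ?_
          rw [Finset.mul_sum]
          exact Fintype.sum_equiv (Equiv.mulLeft φ⁻¹) _ _ fun ψ => by simp
      _ ≤ T * T' := by
          rw [← Finset.sum_mul]
          exact mul_le_mul h3 h3' (Finset.sum_nonneg fun _ _ => norm_nonneg _)
            ((Finset.sum_nonneg fun _ _ => norm_nonneg _).trans h3)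
  · intro x
    change f x * g x = _
    rw [key (fun ψ => ψ x), h4, h4', Finset.sum_mul_sum]
    refine Finset.sum_congr rfl fun φ _ => Finset.sum_congr rfl fun ψ _ => ?_
    rw [AddChar.mul_apply]; ring

open scoped Classical in
/-- Orthogonality for the characters of `G ⧸ V`. -/
lemma sum_trivial_on (V : AddSubgroup G) (x : G) :
    ∑ ψ : AddChar G ℂ, (if ∀ y ∈ V, ψ y = 1 then ψ x else 0) = if x ∈ V then (V.index : ℂ) else 0 := by
  set S : G → ℂ := fun x => ∑ ψ : AddChar G ℂ, (if ∀ y ∈ V, ψ y = 1 then ψ x else 0) with hS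
  have := Fintype.ofFinite G
  have hin : ∀ x ∈ V, S x = S 0 := by
    intro x hx
    refine Finset.sum_congr rfl fun ψ _ => ?_
    split_ifs with h
    · rw [h x hx, AddChar.map_zero_eq_one]
    · rfl
  -- a character of `G ⧸ V` not trivial at `x` permutes the summands and multiplies the sum
  have hout : ∀ x, x ∉ V → S x = 0 := by
    intro x hx
    obtain ⟨φ, hφ⟩ := (AddChar.exists_apply_ne_zero (a := (QuotientAddGroup.mk' V x))).2 (by
      simpa using hx)
    let φ' : AddChar G ℂ := φ.compAddMonoidHom (QuotientAddGroup.mk' V)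
    have hφ' : ∀ y ∈ V, φ' y = 1 := by
      intro y hy
      have : (QuotientAddGroup.mk' V) y = 0 := by simpa using hy
      rw [AddChar.compAddMonoidHom_apply, this, AddChar.map_zero_eq_one]
    have : S x = φ' x * S x := by
      conv_lhs => rw [hS]
      rw [hS]
      simp only
      rw [Finset.mul_sum]
      refine Fintype.sum_equiv (Equiv.mulLeft φ'⁻¹) _ _ fun ψ => ?_
      have e : (∀ y ∈ V, (φ'⁻¹ * ψ) y = 1) ↔ ∀ y ∈ V, ψ y = 1 := by
        refine forall₂_congr fun y hy => ?_
        rw [AddChar.mul_apply, AddChar.inv_apply, hφ' _ (V.neg_mem hy), one_mul]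
      simp only [Equiv.coe_mulLeft, e]
      split_ifs
      · rw [← AddChar.mul_apply]; simp
      · simp
    have h1 : (φ' x - 1) * S x = 0 := by linear_combination -this
    rcases mul_eq_zero.1 h1 with h | h
    · exact absurd (sub_eq_zero.1 h) hφ
    · exact h
  -- `S 0` is found by summing over `x` in two ways
  have hsum : ∑ x, S x = Nat.card G := by
    rw [hS]
    simp only
    rw [Finset.sum_comm, Finset.sum_eq_single 0]
    · simp
    · intro ψ _ hψ
      split_ifs
      · rw [AddChar.sum_eq_ite, if_neg hψ]
      · simp
    · simp
  have hsum' : ∑ x, S x = Nat.card V * S 0 := by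
    have : ∀ x, S x = if x ∈ V then S 0 else 0 := by
      intro x
      split_ifs with h
      · exact hin x h
      · exact hout x h
    rw [Finset.sum_congr rfl fun x _ => this x, ← Finset.sum_filter, Finset.sum_const, nsmul_eq_mul]
    congr 2
    rw [Nat.card_eq_fintype_card, Fintype.card_subtype]
  have h0 : S 0 = V.index := by
    have h1 : (Nat.card V : ℂ) * S 0 = Nat.card V * V.index := by
      rw [← hsum', hsum, ← V.card_mul_index]; push_cast; ring
    exact mul_left_cancel₀ (Nat.cast_ne_zero.2 Nat.card_pos.ne') h1
  change S x = if x ∈ V then (V.index : ℂ) else 0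
  split_ifs with h
  · rw [hin x h, h0]
  · exact hout x h

open scoped Classical in
/-- The complex-valued indicator function of the complement of `V`. -/
noncomputable def ind (V : AddSubgroup G) (x : G) : ℂ := if x ∈ V then 0 else 1

open scoped Classical in
lemma card_trivial_on (V : AddSubgroup G) :
    (((univ : Finset (AddChar G ℂ)).filter fun ψ => ∀ y ∈ V, ψ y = 1).card : ℝ) = V.index := by
  have := sum_trivial_on V 0
  simp only [AddChar.map_zero_eq_one, V.zero_mem, if_true] at this
  rw [← Finset.sum_filter, Finset.sum_const, nsmul_eq_mul, mul_one] at this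
  exact_mod_cast this

open scoped Classical in
/-- Subtracting its mean from `ind V` leaves the nontrivial characters that are trivial on `V`, each
with coefficient `-1 / [G : V]`. -/
lemma Rep.ind_sub (V : AddSubgroup G) (hV : V.index ≠ 0) :
    Rep V (fun x => ind V x - (1 - (V.index : ℂ)⁻¹)) 0 (1 - (V.index : ℝ)⁻¹) := by
  have hk : (V.index : ℂ) ≠ 0 := Nat.cast_ne_zero.2 hV
  refine ⟨fun ψ => if ψ = 1 then 0 else if ∀ y ∈ V, ψ y = 1 then -(V.index : ℂ)⁻¹ else 0, ?_, by simp, ?_, ?_⟩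
  · intro ψ hψ
    by_contra h
    simp [h] at hψ
  · have : ∀ ψ : AddChar G ℂ, ‖(if ψ = 1 then 0 else if ∀ y ∈ V, ψ y = 1 then -(V.index : ℂ)⁻¹ else 0 : ℂ)‖
        = (if ∀ y ∈ V, ψ y = 1 then (V.index : ℝ)⁻¹ else 0) - if ψ = 1 then (V.index : ℝ)⁻¹ else 0 := by
      intro ψ
      by_cases h1 : ψ = 1
      · simp [h1]
      · by_cases h2 : ∀ y ∈ V, ψ y = 1
        · rw [if_neg h1, if_pos h2, if_pos h2, if_neg h1]; simp
        · rw [if_neg h1, if_neg h2, if_neg h2, if_neg h1]; simp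
    simp_rw [this]
    rw [Finset.sum_sub_distrib, ← Finset.sum_filter, Finset.sum_const, nsmul_eq_mul, card_trivial_on,
      Finset.sum_ite_eq' univ (1 : AddChar G ℂ), if_pos (Finset.mem_univ _),
      mul_inv_cancel₀ (Nat.cast_ne_zero.2 hV)]
  · intro x
    have : ∀ ψ : AddChar G ℂ, (if ψ = 1 then 0 else if ∀ y ∈ V, ψ y = 1 then -(V.index : ℂ)⁻¹ else 0 : ℂ) * ψ x
        = -(V.index : ℂ)⁻¹ * (if ∀ y ∈ V, ψ y = 1 then ψ x else 0) + if ψ = 1 then (V.index : ℂ)⁻¹ else 0 := by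
      intro ψ
      by_cases h1 : ψ = 1
      · simp [h1]
      · by_cases h2 : ∀ y ∈ V, ψ y = 1
        · rw [if_neg h1, if_pos h2, if_pos h2, if_neg h1]; simp
        · rw [if_neg h1, if_neg h2, if_neg h2, if_neg h1]; simp
    simp_rw [this]
    rw [Finset.sum_add_distrib, ← Finset.mul_sum, sum_trivial_on,
      Finset.sum_ite_eq' univ (1 : AddChar G ℂ), if_pos (Finset.mem_univ _), ind]
    split_ifs
    · field_simp; ring
    · ring

open scoped Classical in
lemma Rep.ind (V : AddSubgroup G) (hV : V.index ≠ 0) :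
    Rep V (ind V) (1 - (V.index : ℝ)⁻¹) (2 * (1 - (V.index : ℝ)⁻¹)) := by
  obtain ⟨c, h1, h2, h3, h4⟩ := Rep.ind_sub V hV
  have hk : (0 : ℝ) ≤ 1 - (V.index : ℝ)⁻¹ :=
    sub_nonneg.2 (inv_le_one_of_one_le₀ (by exact_mod_cast Nat.one_le_iff_ne_zero.2 hV))
  refine ⟨fun ψ => c ψ + if ψ = 1 then (1 - (V.index : ℂ)⁻¹) else 0, ?_, ?_, ?_, ?_⟩
  · intro ψ hψ
    by_cases h : ψ = 1
    · simp [h]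
    · exact h1 ψ (by simpa [h] using hψ)
  · simp [h2]
  · calc _ ≤ ∑ ψ, (‖c ψ‖ + if ψ = 1 then (1 - (V.index : ℝ)⁻¹) else 0) := by
          refine Finset.sum_le_sum fun ψ _ => (norm_add_le _ _).trans ?_
          gcongr
          split_ifs
          · have : (1 - (V.index : ℂ)⁻¹) = ((1 - (V.index : ℝ)⁻¹ : ℝ) : ℂ) := by push_cast; rfl
            rw [this, Complex.norm_real, Real.norm_of_nonneg hk]
          · simp
      _ ≤ _ := by
          rw [Finset.sum_add_distrib, Finset.sum_ite_eq' univ (1 : AddChar G ℂ), if_pos (Finset.mem_univ _)]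
          linarith
  · intro x
    have := h4 x
    simp_rw [add_mul]
    rw [Finset.sum_add_distrib, ← this]
    simp [ite_mul]

end

section
variable {G : Type*} [AddCommGroup G] {R : Type*} [CommRing R] (ρ : R →+* AddMonoid.End G)

/-- The subgroup `r • G`, where `G` is seen as an `R`-module through `ρ`. -/
def mulRange (r : R) : AddSubgroup G := (ρ r : G →+ G).range

lemma mulRange_mul_le_left (r s : R) : mulRange ρ (r * s) ≤ mulRange ρ r := by
  rintro _ ⟨x, rfl⟩
  exact ⟨ρ s x, by rw [map_mul]; rfl⟩

lemma mulRange_mul_le_right (r s : R) : mulRange ρ (r * s) ≤ mulRange ρ s := by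
  rw [mul_comm]; exact mulRange_mul_le_left ρ s r

lemma mulRange_sup {r s : R} (h : IsCoprime r s) : mulRange ρ r ⊔ mulRange ρ s = ⊤ := by
  obtain ⟨a, b, hab⟩ := h
  refine eq_top_iff.2 fun x _ => AddSubgroup.mem_sup.2 ⟨ρ r (ρ a x), ⟨_, rfl⟩, ρ s (ρ b x), ⟨_, rfl⟩, ?_⟩
  have : ρ (a * r + b * s) x = x := by rw [hab, map_one]; rfl
  conv_rhs => rw [← this, mul_comm a, mul_comm b, map_add, map_mul, map_mul]
  rfl

variable [Finite G]

lemma Rep.mul_of_isCoprime {r s : R} {f g : G → ℂ} {a T a' T' : ℝ} (h : Rep (mulRange ρ r) f a T)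
    (h' : Rep (mulRange ρ s) g a' T') (hrs : IsCoprime r s) :
    Rep (mulRange ρ (r * s)) (fun x => f x * g x) (a * a') (T * T') :=
  h.mul h' (mulRange_sup ρ hrs) (mulRange_mul_le_left ρ r s) (mulRange_mul_le_right ρ r s)

lemma theta_nonneg (V : AddSubgroup G) : (0 : ℝ) ≤ 1 - (V.index : ℝ)⁻¹ :=
  sub_nonneg.2 (inv_le_one_of_one_le₀ (by exact_mod_cast Nat.one_le_iff_ne_zero.2 V.index_ne_zero_of_finite))

open scoped Classical in
/-- For pairwise coprime `r`, the events of not lying in `r • G` are independent. -/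
lemma Rep.prod (S : Finset R) (hS : (S : Set R).Pairwise IsCoprime) :
    Rep (mulRange ρ (∏ r ∈ S, r)) (fun x => ∏ r ∈ S, PNB.ind (mulRange ρ r) x)
      (∏ r ∈ S, (1 - ((mulRange ρ r).index : ℝ)⁻¹))
      (2 ^ S.card * ∏ r ∈ S, (1 - ((mulRange ρ r).index : ℝ)⁻¹)) := by
  induction S using Finset.induction_on with
  | empty => simpa using Rep.one
  | insert r S hr ih =>
    have h1 := ih (hS.mono (by simp))
    have h2 := Rep.ind (mulRange ρ r) AddSubgroup.index_ne_zero_of_finite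
    have hc : IsCoprime r (∏ r ∈ S, r) := by
      refine IsCoprime.prod_right fun s hs => hS (by simp) (by simp [hs]) ?_
      rintro rfl; exact hr hs
    have h3 := h2.mul_of_isCoprime ρ h1 hc
    simp only [Finset.prod_insert hr, Finset.card_insert_of_notMem hr]
    convert h3 using 1
    ring
end

/-! ### Mixed character sums -/

section
variable {K : Type*} [Field K] [Fintype K]

/-- The multiplicative character of `K` that extends by zero a character of `Kˣ`. -/
noncomputable def toMulChar (χ : AddChar (Additive Kˣ) ℂ) : MulChar K ℂ :=
  MulChar.ofUnitHom (MonoidHom.toHomUnits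
    { toFun := fun u => χ (Additive.ofMul u)
      map_one' := χ.map_zero_eq_one
      map_mul' := fun _ _ => χ.map_add_eq_mul _ _ })

lemma toMulChar_apply (χ : AddChar (Additive Kˣ) ℂ) (u : Kˣ) :
    toMulChar χ (u : K) = χ (Additive.ofMul u) := by
  simp [toMulChar]

open scoped Classical in
lemma sum_units (g : K → ℂ) (h0 : g 0 = 0) : ∑ u : Kˣ, g u = ∑ x, g x := by
  rw [← Finset.sum_subset (Finset.subset_univ ((univ : Finset Kˣ).image (fun u : Kˣ => (u : K))))]
  · rw [Finset.sum_image fun u _ v _ h => Units.ext h]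
  · intro x _ hx
    have : x = 0 := by
      by_contra h
      exact hx (Finset.mem_image.2 ⟨Units.mk0 x h, Finset.mem_univ _, rfl⟩)
    rw [this, h0]

open scoped Classical in
/-- Up to the correction `[χ = 1]`, which stands for the missing term `x = 0`, the sum `∑ χ(u) ψ(u)` is
`|K|` if both characters are trivial, `0` if exactly one is, and a Gauss sum, of absolute value
`√|K|`, otherwise. -/
lemma charSum (χ : AddChar (Additive Kˣ) ℂ) (ψ : AddChar K ℂ) :
    ‖(∑ u : Kˣ, χ (Additive.ofMul u) * ψ u) + (if χ = 1 then 1 else 0)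
      - (if χ = 1 ∧ ψ = 1 then (Fintype.card K : ℂ) else 0)‖ ≤
      if χ ≠ 1 ∧ ψ ≠ 1 then √(Fintype.card K) else 0 := by
  by_cases hχ : χ = 1
  · have e1 : ∑ u : Kˣ, ψ u = (∑ x, ψ x) - 1 := by
      have := sum_units (fun x => ψ x - if x = 0 then 1 else 0) (by simp)
      simpa using this
    subst hχ
    by_cases hψ : ψ = 1
    · simp [hψ, ← Nat.card_eq_fintype_card, Nat.card_units]
    · simp only [AddChar.one_apply, one_mul, e1]
      have : ∑ x, ψ x = 0 := by rw [AddChar.sum_eq_ite, if_neg (show ¬ ψ = 0 from hψ)]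
      simp [this, hψ]
  · have hm : toMulChar χ ≠ 1 := by
      intro h
      apply hχ
      ext u
      have := toMulChar_apply χ (Additive.toMul u)
      rw [h, MulChar.one_apply_coe] at this
      exact this.symm
    have e2 : ∑ u : Kˣ, χ (Additive.ofMul u) * ψ u = gaussSum (toMulChar χ) ψ := by
      have := sum_units (fun x => toMulChar χ x * ψ x) (by rw [MulChar.map_zero, zero_mul])
      simp_rw [toMulChar_apply] at this
      exact this
    by_cases hψ : ψ = 1
    · subst hψ
      rw [e2, gaussSum_one_right hm]; simp [hχ]
    · have := gaussSum_mul_gaussSum_eq_card hm (AddChar.IsPrimitive.of_ne_one hψ)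
      rw [← star_gaussSum_eq] at this
      rw [if_neg hχ, if_neg (fun h => hχ h.1), if_pos ⟨hχ, hψ⟩, add_zero, sub_zero, e2]
      apply Real.le_sqrt_of_sq_le
      have h2 := congrArg norm this
      rw [norm_mul, norm_star, Complex.norm_natCast] at h2
      rw [sq, h2]

open scoped Classical in
/-- If `h 0 = 0`, the corrections `[χ = 1]` of `charSum` cancel, as they add up to a multiple of `h 0`.
The pair of trivial characters gives the main term `a * a' * |K|` and the pairs of nontrivial ones
give the error. -/
lemma bilinear {V : AddSubgroup (Additive Kˣ)} {V' : AddSubgroup K} {f : Additive Kˣ → ℝ}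
    {h : K → ℝ} {a T a' T' : ℝ} (hf : Rep V (fun u => (f u : ℂ)) a T) (hh : Rep V' (fun x => (h x : ℂ)) a' T')
    (h0 : h 0 = 0) (ha : 0 ≤ a) (ha' : 0 ≤ a') :
    |∑ u : Kˣ, f (Additive.ofMul u) * h u - a * a' * Fintype.card K| ≤
      (T - a) * (T' - a') * √(Fintype.card K) := by
  obtain ⟨c, -, c1, cT, hc⟩ := hf
  obtain ⟨d, -, d1, dT, hd⟩ := hh
  set q : ℝ := √(Fintype.card K)
  have key : ((∑ u : Kˣ, f (Additive.ofMul u) * h u - a * a' * Fintype.card K : ℝ) : ℂ) =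
      ∑ χ, ∑ ψ, c χ * d ψ * ((∑ u : Kˣ, χ (Additive.ofMul u) * ψ u) + (if χ = 1 then 1 else 0)
      - (if χ = 1 ∧ ψ = 1 then (Fintype.card K : ℂ) else 0)) := by
    simp_rw [mul_sub, mul_add, Finset.sum_sub_distrib, Finset.sum_add_distrib]
    have e1 : ∑ χ, ∑ ψ, c χ * d ψ * (if χ = 1 then 1 else 0) = 0 := by
      have : ∀ χ, ∑ ψ, c χ * d ψ * (if χ = 1 then 1 else 0) = 0 := by
        intro χ
        have hz := hd 0
        simp only [h0, AddChar.map_zero_eq_one, mul_one, Complex.ofReal_zero] at hz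
        rw [← Finset.sum_mul, ← Finset.mul_sum, ← hz]; simp
      exact Finset.sum_eq_zero fun χ _ => this χ
    have e2 : ∑ χ, ∑ ψ, c χ * d ψ * (if χ = 1 ∧ ψ = 1 then (Fintype.card K : ℂ) else 0)
        = a * a' * Fintype.card K := by
      rw [Finset.sum_eq_single 1, Finset.sum_eq_single 1]
      · simp [c1, d1]
      · intro ψ _ hψ; simp [hψ]
      · simp
      · intro χ _ hχ; simp [hχ]
      · simp
    rw [e1, e2, add_zero]
    push_cast
    congr 1
    simp_rw [hc, hd, Finset.sum_mul_sum, Finset.mul_sum]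
    rw [Finset.sum_comm]
    refine Finset.sum_congr rfl fun χ _ => ?_
    rw [Finset.sum_comm]
    refine Finset.sum_congr rfl fun ψ _ => Finset.sum_congr rfl fun u _ => ?_
    ring
  have hcs : ∑ χ, (if χ = 1 then 0 else ‖c χ‖) ≤ T - a := by
    have : ∑ χ, ‖c χ‖ = ∑ χ, (if χ = 1 then 0 else ‖c χ‖) + a := by
      rw [← Finset.add_sum_erase _ _ (Finset.mem_univ (1 : AddChar (Additive Kˣ) ℂ)),
        ← Finset.add_sum_erase (a := (1 : AddChar (Additive Kˣ) ℂ)) _ (fun χ => if χ = 1 then 0 else ‖c χ‖) (Finset.mem_univ _),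
        c1, if_pos rfl, Complex.norm_real, Real.norm_of_nonneg ha, zero_add, add_comm]
      congr 1
      exact Finset.sum_congr rfl fun χ hχ => by rw [if_neg (Finset.ne_of_mem_erase hχ)]
    linarith
  have hds : ∑ χ, (if χ = 1 then 0 else ‖d χ‖) ≤ T' - a' := by
    have : ∑ χ, ‖d χ‖ = ∑ χ, (if χ = 1 then 0 else ‖d χ‖) + a' := by
      rw [← Finset.add_sum_erase _ _ (Finset.mem_univ (1 : AddChar K ℂ)),
        ← Finset.add_sum_erase (a := (1 : AddChar K ℂ)) _ (fun χ => if χ = 1 then 0 else ‖d χ‖) (Finset.mem_univ _),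
        d1, if_pos rfl, Complex.norm_real, Real.norm_of_nonneg ha', zero_add, add_comm]
      congr 1
      exact Finset.sum_congr rfl fun χ hχ => by rw [if_neg (Finset.ne_of_mem_erase hχ)]
    linarith
  rw [← Real.norm_eq_abs, ← Complex.norm_real, key]
  calc _ ≤ ∑ χ, ∑ ψ, (if χ = 1 then 0 else ‖c χ‖) * (if ψ = 1 then 0 else ‖d ψ‖) * q := by
        refine (norm_sum_le _ _).trans (Finset.sum_le_sum fun χ _ => (norm_sum_le _ _).trans
          (Finset.sum_le_sum fun ψ _ => ?_))
        rw [norm_mul, norm_mul]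
        refine (mul_le_mul_of_nonneg_left (charSum χ ψ) (by positivity)).trans_eq ?_
        by_cases h1 : χ = 1 <;> by_cases h2 : ψ = 1 <;> simp [h1, h2, q]
    _ = (∑ χ, (if χ = 1 then 0 else ‖c χ‖)) * (∑ ψ, (if ψ = 1 then 0 else ‖d ψ‖)) * q := by
        simp_rw [← Finset.sum_mul, Finset.sum_mul_sum]
    _ ≤ _ := by
        gcongr
        · exact (Finset.sum_nonneg fun χ _ => by split_ifs <;> positivity).trans hcs
end

/-! ### The sieve -/

section
variable {G : Type*} [AddCommGroup G]

open scoped Classical in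
/-- The real-valued indicator function of the complement of `V`. -/
noncomputable def indR (V : AddSubgroup G) (x : G) : ℝ := if x ∈ V then 0 else 1

lemma indR_cast (V : AddSubgroup G) (x : G) : ((indR V x : ℝ) : ℂ) = ind V x := by
  unfold indR ind; split_ifs <;> simp

variable [Finite G] {R : Type*} [CommRing R] (ρ : R →+* AddMonoid.End G)

/-- The density of the elements of `G` outside `r • G`. -/
noncomputable def dens (r : R) : ℝ := 1 - ((mulRange ρ r).index : ℝ)⁻¹

lemma rep_core (S : Finset R) (hS : (S : Set R).Pairwise IsCoprime) :
    Rep (mulRange ρ (∏ r ∈ S, r)) (fun x => ((∏ r ∈ S, indR (mulRange ρ r) x : ℝ) : ℂ))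
      (∏ r ∈ S, dens ρ r) (2 ^ S.card * ∏ r ∈ S, dens ρ r) := by
  have := Rep.prod ρ S hS
  simp_rw [← indR_cast] at this
  simp_rw [Complex.ofReal_prod]
  exact this

/-- Since `s` is coprime to the elements of `S`, no trivial character occurs in the product. -/
lemma rep_core_sub (S : Finset R) (hS : (S : Set R).Pairwise IsCoprime) (s : R)
    (hs : ∀ r ∈ S, IsCoprime r s) :
    Rep (mulRange ρ ((∏ r ∈ S, r) * s))
      (fun x => (((∏ r ∈ S, indR (mulRange ρ r) x) * (indR (mulRange ρ s) x - dens ρ s) : ℝ) : ℂ))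
      0 (2 ^ S.card * (∏ r ∈ S, dens ρ r) * dens ρ s) := by
  have h := (rep_core ρ S hS).mul_of_isCoprime ρ
    (Rep.ind_sub (mulRange ρ s) AddSubgroup.index_ne_zero_of_finite) (IsCoprime.prod_left hs)
  rw [mul_zero] at h
  simp_rw [← indR_cast] at h
  convert h using 1
  · funext x
    unfold dens; push_cast; rfl
  · rfl

lemma core_eq (S : Finset R) (x : G) (hx : ∃ r ∈ S, x ∈ mulRange ρ r) :
    ∏ r ∈ S, indR (mulRange ρ r) x = 0 := by
  obtain ⟨r, hr, h⟩ := hx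
  exact Finset.prod_eq_zero hr (if_pos h)

lemma core_nonneg (S : Finset R) (x : G) : 0 ≤ ∏ r ∈ S, indR (mulRange ρ r) x :=
  Finset.prod_nonneg fun r _ => by unfold indR; split_ifs <;> simp

lemma sum_sub_le (S : Finset R) (x : G) :
    ∑ r ∈ S, (indR (mulRange ρ r) x - dens ρ r) ≤ ∑ r ∈ S, ((mulRange ρ r).index : ℝ)⁻¹ := by
  refine Finset.sum_le_sum fun r _ => ?_
  have : indR (mulRange ρ r) x ≤ 1 := by unfold indR; split_ifs <;> simp
  unfold dens; linarith

lemma sum_sub_le_of_mem (S : Finset R) (x : G) (hx : ∃ r ∈ S, x ∈ mulRange ρ r) :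
    ∑ r ∈ S, (indR (mulRange ρ r) x - dens ρ r) ≤ ∑ r ∈ S, ((mulRange ρ r).index : ℝ)⁻¹ - 1 := by
  classical
  obtain ⟨r, hr, h⟩ := hx
  have := sum_sub_le ρ (S.erase r) x
  rw [← Finset.add_sum_erase _ _ hr, ← Finset.add_sum_erase S (fun r => ((mulRange ρ r).index : ℝ)⁻¹) hr]
  have h2 : indR (mulRange ρ r) x = 0 := if_pos h
  simp only [h2]
  unfold dens at *
  linarith
end

section
variable {K : Type*} [Field K] [Fintype K] {R₁ R₂ : Type*} [CommRing R₁] [CommRing R₂]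

lemma indR_zero (V : AddSubgroup K) : indR V 0 = 0 := if_pos V.zero_mem

/-- A sieve for units avoiding given subgroups of `Kˣ` and of `K`. The subgroups in `A` and `B` are
treated exactly, through the product `f h` of their indicator functions, while those in `A'` and `B'`
are sieved. If each unit lay in one of the subgroups, then
`f h (∑ (indR - dens) + δ) ≤ 0` on `Kˣ`, the inner sum running over `A'` and `B'`: where `f h ≠ 0`,
some `indR` vanishes, and the bracket is at most `∑ 1 / index - 1 + δ = 0`. Summing over the units and
estimating each term by `bilinear` contradicts `hmain`. That `B` is nonempty ensures `h 0 = 0`. -/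
theorem sieve [DecidableEq R₁] [DecidableEq R₂] (ρ₁ : R₁ →+* AddMonoid.End (Additive Kˣ)) (ρ₂ : R₂ →+* AddMonoid.End K)
    (A A' : Finset R₁) (B B' : Finset R₂) (hA : ((A ∪ A' : Finset R₁) : Set R₁).Pairwise IsCoprime)
    (hB : ((B ∪ B' : Finset R₂) : Set R₂).Pairwise IsCoprime) (dA : Disjoint A A') (dB : Disjoint B B')
    (iA : ∀ r ∈ A, 2 ≤ (mulRange ρ₁ r).index) (iB : ∀ r ∈ B, 2 ≤ (mulRange ρ₂ r).index)
    (hne : B.Nonempty) (δ : ℝ) (hδ0 : 0 ≤ δ)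
    (hδ : δ = 1 - ∑ r ∈ A', ((mulRange ρ₁ r).index : ℝ)⁻¹ - ∑ r ∈ B', ((mulRange ρ₂ r).index : ℝ)⁻¹)
    (hmain : (∑ r ∈ A', dens ρ₁ r) * (2 ^ A.card * (2 ^ B.card - 1)) +
      (∑ r ∈ B', dens ρ₂ r) * ((2 ^ A.card - 1) * 2 ^ B.card) <
      δ * (√(Fintype.card K) - (2 ^ A.card - 1) * (2 ^ B.card - 1))) :
    ∃ u : Kˣ, (∀ r ∈ A ∪ A', Additive.ofMul u ∉ mulRange ρ₁ r) ∧ ∀ r ∈ B ∪ B', (u : K) ∉ mulRange ρ₂ r := by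
  classical
  by_contra! hno
  have hAA := hA.mono (show (A : Set R₁) ⊆ _ by simp)
  have hBB := hB.mono (show (B : Set R₂) ⊆ _ by simp)
  set f : Additive Kˣ → ℝ := fun x => ∏ r ∈ A, indR (mulRange ρ₁ r) x with hf
  set h : K → ℝ := fun x => ∏ r ∈ B, indR (mulRange ρ₂ r) x with hh
  set θ₁ : ℝ := ∏ r ∈ A, dens ρ₁ r
  set θ₂ : ℝ := ∏ r ∈ B, dens ρ₂ r
  have pos : ∀ k : ℕ, 2 ≤ k → (0 : ℝ) < 1 - (k : ℝ)⁻¹ := fun k hk =>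
    sub_pos.2 (inv_lt_one_of_one_lt₀ (by exact_mod_cast hk))
  have p1 : 0 < θ₁ := Finset.prod_pos fun r hr => pos _ (iA r hr)
  have p2 : 0 < θ₂ := Finset.prod_pos fun r hr => pos _ (iB r hr)
  set q : ℝ := √(Fintype.card K) with hq
  have qq : q * q = Fintype.card K := Real.mul_self_sqrt (by positivity)
  have qpos : 0 < q := Real.sqrt_pos.2 (by exact_mod_cast Fintype.card_pos)
  have h0 : h 0 = 0 := by
    obtain ⟨r, hr⟩ := hne
    exact Finset.prod_eq_zero hr (indR_zero _)
  set a : ℝ := 2 ^ A.card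
  set b : ℝ := 2 ^ B.card
  have r1 := rep_core ρ₁ A hAA
  have r2 := rep_core ρ₂ B hBB
  -- lower bound for the main term, then upper bounds for the sieved ones
  have L0 : θ₁ * θ₂ * (q * q) - (a - 1) * (b - 1) * (θ₁ * θ₂ * q) ≤
      ∑ u : Kˣ, f (Additive.ofMul u) * h u := by
    have := (abs_le.1 (bilinear r1 r2 h0 p1.le p2.le)).1
    rw [qq]
    linarith
  have L1 : ∀ s ∈ A', - (dens ρ₁ s * (a * (b - 1)) * (θ₁ * θ₂ * q)) ≤
      ∑ u : Kˣ, f (Additive.ofMul u) * (indR (mulRange ρ₁ s) (Additive.ofMul u) - dens ρ₁ s) * h u := by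
    intro s hs
    have := (abs_le.1 (bilinear (rep_core_sub ρ₁ A hAA s fun r hr => hA (by simp [hr]) (by simp [hs])
      (fun e => Finset.disjoint_left.1 dA hr (e ▸ hs))) r2 h0 le_rfl p2.le)).1
    simp only [zero_mul, sub_zero] at this
    refine le_trans (le_of_eq ?_) this
    ring
  have L2 : ∀ s ∈ B', - (dens ρ₂ s * ((a - 1) * b) * (θ₁ * θ₂ * q)) ≤
      ∑ u : Kˣ, f (Additive.ofMul u) * (h u * (indR (mulRange ρ₂ s) u - dens ρ₂ s)) := by
    intro s hs
    have := (abs_le.1 (bilinear (h := fun x => h x * (indR (mulRange ρ₂ s) x - dens ρ₂ s)) r1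
      (rep_core_sub ρ₂ B hBB s fun r hr => hB (by simp [hr]) (by simp [hs])
      (fun e => Finset.disjoint_left.1 dB hr (e ▸ hs))) (by simp [h0]) p1.le le_rfl)).1
    simp only [mul_zero, zero_mul, sub_zero] at this
    refine le_trans (le_of_eq ?_) this
    ring
  have S1 := Finset.sum_le_sum L1
  have S2 := Finset.sum_le_sum L2
  rw [Finset.sum_neg_distrib, ← Finset.sum_mul, ← Finset.sum_mul, Finset.sum_comm] at S1 S2
  have X : ∑ u : Kˣ, f (Additive.ofMul u) * h u *
      (∑ s ∈ A', (indR (mulRange ρ₁ s) (Additive.ofMul u) - dens ρ₁ s) +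
        ∑ s ∈ B', (indR (mulRange ρ₂ s) u - dens ρ₂ s) + δ) ≤ 0 := by
    refine Finset.sum_nonpos fun u _ => ?_
    by_cases c1 : ∃ r ∈ A, Additive.ofMul u ∈ mulRange ρ₁ r
    · simp [hf, core_eq ρ₁ A _ c1]
    by_cases c2 : ∃ r ∈ B, (u : K) ∈ mulRange ρ₂ r
    · simp [hh, core_eq ρ₂ B _ c2]
    refine mul_nonpos_of_nonneg_of_nonpos (mul_nonneg (core_nonneg _ _ _) (core_nonneg _ _ _)) ?_
    by_cases c3 : ∃ r ∈ A', Additive.ofMul u ∈ mulRange ρ₁ r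
    · have := sum_sub_le_of_mem ρ₁ A' _ c3
      have := sum_sub_le ρ₂ B' (u : K)
      linarith
    · push Not at c1 c2 c3
      obtain ⟨r, hr, hm⟩ := hno u fun r hr => (Finset.mem_union.1 hr).elim (c1 r) (c3 r)
      have := sum_sub_le_of_mem ρ₂ B' _ ⟨r, (Finset.mem_union.1 hr).resolve_left fun h => c2 r h hm, hm⟩
      have := sum_sub_le ρ₁ A' (Additive.ofMul u)
      linarith
  have e : ∑ u : Kˣ, f (Additive.ofMul u) * h u *
      (∑ s ∈ A', (indR (mulRange ρ₁ s) (Additive.ofMul u) - dens ρ₁ s) +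
        ∑ s ∈ B', (indR (mulRange ρ₂ s) u - dens ρ₂ s) + δ) =
      (∑ u : Kˣ, ∑ s ∈ A', f (Additive.ofMul u) * (indR (mulRange ρ₁ s) (Additive.ofMul u) - dens ρ₁ s) * h u) +
      (∑ u : Kˣ, ∑ s ∈ B', f (Additive.ofMul u) * (h u * (indR (mulRange ρ₂ s) u - dens ρ₂ s))) +
      δ * ∑ u : Kˣ, f (Additive.ofMul u) * h u := by
    rw [Finset.mul_sum, ← Finset.sum_add_distrib, ← Finset.sum_add_distrib]
    refine Finset.sum_congr rfl fun u _ => ?_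
    rw [mul_add, mul_add, Finset.mul_sum, Finset.mul_sum, mul_comm δ]
    congr 2
    · exact Finset.sum_congr rfl fun s _ => by ring
    · exact Finset.sum_congr rfl fun s _ => by ring
  rw [e] at X
  have L0' := mul_le_mul_of_nonneg_left L0 hδ0
  have P : 0 < θ₁ * θ₂ * q := by positivity
  have M := mul_lt_mul_of_pos_right hmain P
  linarith
end

/-! ### Powers in the multiplicative group and twisting -/

section
variable (K : Type*) [Field K] [Fintype K]

/-- The action of `ℤ` on `Kˣ`, written additively: `l` acts as the `l`-th power map. -/
def rhoM : ℤ →+* AddMonoid.End (Additive Kˣ) := Module.toAddMonoidEnd ℤ (Additive Kˣ)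

lemma mem_rhoM (l : ℕ) (u : Kˣ) :
    Additive.ofMul u ∈ mulRange (rhoM K) (l : ℤ) ↔ ∃ v : Kˣ, v ^ l = u := by
  have h : ∀ v : Additive Kˣ, rhoM K (l : ℤ) v = l • v := by
    intro v
    simp [rhoM]
  constructor
  · rintro ⟨v, hv⟩
    refine ⟨v.toMul, ?_⟩
    have := (h v).symm.trans hv
    exact congrArg Additive.toMul this
  · rintro ⟨v, rfl⟩
    exact ⟨Additive.ofMul v, h _⟩

lemma index_rhoM (l : ℕ) (hl : l ∣ Nat.card Kˣ) : (mulRange (rhoM K) (l : ℤ)).index = l := by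
  have : mulRange (rhoM K) (l : ℤ) = Subgroup.toAddSubgroup (powMonoidHom l : Kˣ →* Kˣ).range := by
    ext x
    obtain ⟨u, rfl⟩ := Additive.ofMul.surjective x
    rw [mem_rhoM]
    rfl
  rw [this, Subgroup.index_toAddSubgroup, IsCyclic.index_powMonoidHom_range]
  exact Nat.gcd_eq_right hl

end

/-- Writing `u = g ^ a` for a generator `g`, the exponent `a` is coprime to `Q`, so that it is congruent
modulo `Q` to some `a'` coprime to `|G|`. Then `γ = g ^ (a' - a)` is as required. -/
lemma exists_generator {G : Type*} [CommGroup G] [IsCyclic G] [Finite G] (Q M : ℕ)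
    (hQM : Nat.card G = Q * M) (u : G) (hu : ∀ l, l.Prime → l ∣ Q → ¬ ∃ v : G, v ^ l = u) :
    ∃ γ : G, γ ^ M = 1 ∧ orderOf (γ * u) = Nat.card G := by
  obtain ⟨g, hg⟩ := IsCyclic.exists_generator (α := G)
  obtain ⟨a, rfl⟩ := (mem_powers_iff_mem_zpowers.2 (hg u) : u ∈ Submonoid.powers g)
  have hN : Nat.card G ≠ 0 := Nat.card_pos.ne'
  have : NeZero (Nat.card G) := ⟨hN⟩
  have hco : a.Coprime Q := by
    refine Nat.Coprime.symm (Nat.coprime_of_dvd fun l hl hlQ hla => hu l hl hlQ ?_)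
    obtain ⟨b, rfl⟩ := hla
    exact ⟨g ^ b, by simp only; rw [← pow_mul, mul_comm]⟩
  have hd : Q ∣ Nat.card G := ⟨M, hQM⟩
  obtain ⟨z, hz⟩ := ZMod.unitsMap_surjective hd (ZMod.unitOfCoprime a hco)
  have h1 : ((z : ZMod (Nat.card G)).val : ZMod Q) = a := by
    have := congrArg (Units.val) hz
    rw [ZMod.unitsMap_val, ZMod.coe_unitOfCoprime] at this
    rw [← this, ZMod.natCast_val]
  set a' := (z : ZMod (Nat.card G)).val
  have hco' : a'.Coprime (Nat.card G) := ZMod.val_coe_unit_coprime z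
  have hmod : a' ≡ a [MOD Q] := (ZMod.natCast_eq_natCast_iff _ _ _).1 h1
  have hog : orderOf g = Nat.card G := orderOf_eq_card_of_forall_mem_zpowers hg
  refine ⟨g ^ a' * (g ^ a)⁻¹, ?_, ?_⟩
  · have : (g ^ a') ^ M = (g ^ a) ^ M := by
      rw [← pow_mul, ← pow_mul, pow_inj_mod, hog, hQM]
      exact hmod.mul_right' M
    rw [mul_pow, inv_pow, this, mul_inv_cancel]
  · simp only [inv_mul_cancel_right]
    rw [Nat.Coprime.orderOf_pow (hog ▸ hco'.symm), hog]

section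
variable (F K : Type*) [Field F] [Fintype F] [Field K] [Fintype K] [Algebra F K]

lemma mem_range_of_pow_card {x : K} (hx : x ^ Fintype.card F = x) : ∃ c : F, algebraMap F K c = x := by
  have : x ∈ (⊥ : IntermediateField F K) := by
    rw [IsGalois.mem_bot_iff_fixed]
    intro f
    obtain ⟨i, rfl⟩ := (FiniteField.bijective_frobeniusAlgEquivOfAlgebraic_pow F K).2 f
    simp only [AlgEquiv.coe_pow]
    exact Function.iterate_fixed (by simpa using hx) _
  exact IntermediateField.mem_bot.1 this

/-- If `γ ^ ((q - 1) * g) = 1` with `g ∣ q - 1`, multiplication by `γ` preserves normality: the `(q - 1)`-th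
power of `γ ^ (q - 1)` is `1`, hence `γ ^ (q - 1)` lies in `F`, so each conjugate `γ ^ q ^ i` is a scalar multiple of `γ`, and the conjugates of `γ * w` are scalar
multiples of `γ` times those of `w`. -/
lemma twist (n : ℕ) (g : ℕ) (hg : g ∣ Fintype.card F - 1) (γ w : K) (h0 : γ ≠ 0)
    (hγ : γ ^ ((Fintype.card F - 1) * g) = 1)
    (hw : LinearIndependent F (fun i : Fin n => w ^ Fintype.card F ^ (i : ℕ))) :
    LinearIndependent F (fun i : Fin n => (γ * w) ^ Fintype.card F ^ (i : ℕ)) := by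
  set q := Fintype.card F
  have hq : 1 < q := Fintype.one_lt_card
  obtain ⟨c, hc⟩ : ∃ c : F, algebraMap F K c = γ ^ (q - 1) := by
    apply mem_range_of_pow_card
    obtain ⟨d, hd⟩ := hg
    have : (γ ^ (q - 1)) ^ (q - 1) = 1 := by
      rw [show (γ ^ (q - 1)) ^ (q - 1) = (γ ^ (q - 1)) ^ (g * d) by rw [← hd],
        pow_mul _ g d, ← pow_mul γ (q - 1) g, hγ, one_pow]
    calc (γ ^ (q - 1)) ^ q = (γ ^ (q - 1)) ^ (q - 1 + 1) := by congr 1; omega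
      _ = _ := by rw [pow_succ, this, one_mul]
  have hc0 : c ≠ 0 := by
    rintro rfl
    rw [map_zero] at hc
    exact pow_ne_zero _ h0 hc.symm
  have key : ∀ i : ℕ, ∃ d : Fˣ, γ ^ q ^ i = (d : F) • γ := by
    intro i
    obtain ⟨k, hk⟩ : q - 1 ∣ q ^ i - 1 := Nat.sub_one_dvd_pow_sub_one q i
    have hp : 0 < q ^ i := by positivity
    refine ⟨Units.mk0 (c ^ k) (pow_ne_zero _ hc0), ?_⟩
    rw [Units.val_mk0, Algebra.smul_def, map_pow, hc, ← pow_mul, ← hk, ← pow_succ]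
    congr 1; omega
  choose d hd using key
  have h1 := (hw.map' (LinearMap.mulLeft F γ) (LinearMap.ker_eq_bot.2 (mul_right_injective₀ h0))).units_smul
    (fun i => d i)
  have e : (fun i : Fin n => (γ * w) ^ q ^ (i : ℕ)) =
      (fun i : Fin n => d i) • (LinearMap.mulLeft F γ) ∘ fun i : Fin n => w ^ q ^ (i : ℕ) := by
    funext i
    change _ = (d i) • (γ * w ^ q ^ (i : ℕ))
    rw [mul_pow, hd, Units.smul_def, smul_mul_assoc]
  rw [e]
  exact h1

end

/-! ### Normal elements and the Frobenius module structure -/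

open scoped Classical in
/-- The set of monic irreducible factors of `X ^ n - 1` over `F`. -/
noncomputable def pset (F : Type*) [Field F] (n : ℕ) : Finset F[X] :=
  UniqueFactorizationMonoid.primeFactors (X ^ n - 1 : F[X])

section
variable (F : Type*) [Field F]

lemma X_pow_sub_one_ne_zero {n : ℕ} (hn : 0 < n) : (X ^ n - 1 : F[X]) ≠ 0 :=
  (monic_X_pow_sub_C 1 hn.ne').ne_zero

variable {F} in
lemma mem_pset {n : ℕ} (hn : 0 < n) {P : F[X]} :
    P ∈ pset F n ↔ Irreducible P ∧ P.Monic ∧ P ∣ X ^ n - 1 := by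
  classical
  rw [pset, UniqueFactorizationMonoid.mem_primeFactors]
  convert Polynomial.mem_normalizedFactors_iff (p := P) (X_pow_sub_one_ne_zero F hn)

lemma pset_coprime {n : ℕ} (hn : 0 < n) : (pset F n : Set F[X]).Pairwise IsCoprime := by
  intro P hP Q hQ hne
  obtain ⟨i1, m1, -⟩ := (mem_pset hn).1 hP
  obtain ⟨i2, m2, -⟩ := (mem_pset hn).1 hQ
  refine (Irreducible.coprime_iff_not_dvd i1).2 fun h => hne ?_
  exact eq_of_monic_of_associated m1 m2 (i1.associated_of_dvd i2 h)
end

section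
variable (F K : Type*) [Field F] [Fintype F] [Field K] [Fintype K] [Algebra F K]

/-- The Frobenius `x ↦ x ^ |F|` as an `F`-linear endomorphism of `K`. -/
noncomputable def fr : Module.End F K := (FiniteField.frobeniusAlgHom F K).toLinearMap

lemma fr_pow (i : ℕ) (x : K) : (fr F K ^ i) x = x ^ Fintype.card F ^ i := by
  rw [Module.End.pow_apply]
  have : ⇑(fr F K) = (· ^ Fintype.card F) := rfl
  rw [this, pow_iterate]

/-- The action of `F[X]` on `K` for which `X` acts as the Frobenius. -/
noncomputable def rhoA : F[X] →+* AddMonoid.End K :=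
  (Module.toAddMonoidEnd (Module.End F K) K).comp (aeval (R := F) (fr F K) : F[X] →ₐ[F] _).toRingHom

/-- `w` is normal over `F`. Linear independence of `[K : F]` conjugates suffices to have a basis. -/
def NB (w : K) : Prop :=
  LinearIndependent F (fun i : Fin (Module.finrank F K) => w ^ Fintype.card F ^ (i : ℕ))

lemma aeval_fr (f : F[X]) {m : ℕ} (hm : 0 < m) (hf : f.degree < m) (w : K) :
    aeval (fr F K) f w = ∑ i : Fin m, f.coeff i • w ^ Fintype.card F ^ (i : ℕ) := by
  have hlt : f.natDegree < m := by
    by_cases h0 : f = 0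
    · simpa [h0] using hm
    · exact (natDegree_lt_iff_degree_lt h0).2 hf
  rw [aeval_eq_sum_range' hlt]
  rw [LinearMap.sum_apply, Finset.sum_range]
  refine Finset.sum_congr rfl fun i _ => ?_
  rw [LinearMap.smul_apply, fr_pow]

lemma card_K : Fintype.card K = Fintype.card F ^ Module.finrank F K := Module.card_eq_pow_finrank

lemma aeval_fr_X_pow_sub_one : aeval (fr F K) (X ^ Module.finrank F K - 1 : F[X]) = 0 := by
  rw [← FiniteField.minpoly_frobeniusAlgHom F K]
  exact minpoly.aeval _ _

lemma finrank_pos' : 0 < Module.finrank F K := Module.finrank_pos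

variable {F K}

/-- Polynomials in the Frobenius that kill a normal element are multiples of `X ^ n - 1`. -/
lemma NB.dvd {w : K} (hw : NB F K w) {f : F[X]} (hf : aeval (fr F K) f w = 0) :
    X ^ Module.finrank F K - 1 ∣ f := by
  set n := Module.finrank F K with hn
  have hm : (X ^ n - 1 : F[X]).Monic := monic_X_pow_sub_C 1 (finrank_pos' F K).ne'
  rw [← modByMonic_eq_zero_iff_dvd hm]
  have hdeg : (f %ₘ (X ^ n - 1)).degree < n := by
    refine (degree_modByMonic_lt f hm).trans_le ?_
    exact (degree_X_pow_sub_C (finrank_pos' F K) (1 : F)).le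
  have h0 : aeval (fr F K) (f %ₘ (X ^ n - 1)) w = 0 := by
    have := congrArg (fun g => aeval (fr F K) g w) (modByMonic_add_div f (X ^ n - 1))
    simp only [map_add, map_mul, aeval_fr_X_pow_sub_one, LinearMap.add_apply, zero_mul, hn,
      LinearMap.zero_apply, add_zero, hf] at this
    exact this
  rw [aeval_fr F K _ (finrank_pos' F K) hdeg] at h0
  have := Fintype.linearIndependent_iff.1 hw _ h0
  ext i
  rw [coeff_zero]
  by_cases hi : i < n
  · exact this ⟨i, hi⟩
  · exact coeff_eq_zero_of_degree_lt (hdeg.trans_le (by exact_mod_cast not_lt.1 hi))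

lemma NB.of_dvd {w : K} (hw : ∀ f : F[X], aeval (fr F K) f w = 0 → X ^ Module.finrank F K - 1 ∣ f) :
    NB F K w := by
  unfold NB
  set n := Module.finrank F K with hn
  refine Fintype.linearIndependent_iff.2 fun g hg => ?_
  let f := (degreeLTEquiv F n).symm g
  have hdeg : (f : F[X]).degree < n := mem_degreeLT.1 f.2
  have hco : ∀ i : Fin n, (f : F[X]).coeff i = g i := fun i =>
    congrFun ((degreeLTEquiv F n).apply_symm_apply g) i
  have h0 : aeval (fr F K) (f : F[X]) w = 0 := by
    rw [aeval_fr F K _ (finrank_pos' F K) hdeg]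
    simpa only [hco] using hg
  have hz : (f : F[X]) = 0 := by
    refine eq_zero_of_dvd_of_degree_lt (hw _ h0) (hdeg.trans_eq ?_)
    exact (degree_X_pow_sub_C (finrank_pos' F K) (1 : F)).symm
  intro i
  rw [← hco, hz, coeff_zero]

lemma NB.span {w : K} (hw : NB F K w) :
    Submodule.span F (Set.range fun i : Fin (Module.finrank F K) => w ^ Fintype.card F ^ (i : ℕ)) = ⊤ :=
  hw.span_eq_top_of_card_eq_finrank' (by simp)

lemma NB.exists_aeval {w : K} (hw : NB F K w) (x : K) : ∃ f : F[X], aeval (fr F K) f w = x := by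
  obtain ⟨c, hc⟩ := (Submodule.mem_span_range_iff_exists_fun F).1 (hw.span ▸ Submodule.mem_top (x := x))
  refine ⟨∑ i, C (c i) * X ^ (i : ℕ), ?_⟩
  rw [← hc, map_sum, LinearMap.sum_apply]
  refine Finset.sum_congr rfl fun i _ => ?_
  rw [← smul_eq_C_mul, map_smul, map_pow, aeval_X, LinearMap.smul_apply, fr_pow]

variable (F K) in
lemma exists_NB : ∃ w : K, NB F K w := by
  obtain ⟨w, hw⟩ := exists_linearIndependent_algEquiv_apply F K
  refine ⟨w, ?_⟩
  have := hw.comp _ (FiniteField.bijective_frobeniusAlgEquivOfAlgebraic_pow F K).1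
  unfold NB
  convert this using 1
  funext i
  simp only [Function.comp, AlgEquiv.coe_pow, FiniteField.coe_frobeniusAlgEquivOfAlgebraic, pow_iterate]

lemma mem_rhoA (P : F[X]) (x : K) : x ∈ mulRange (rhoA F K) P ↔ ∃ y, aeval (fr F K) P y = x := Iff.rfl

/-- If `w` is normal, then `f ↦ f(Frob) w` identifies `F[X] / (P)` with `K / P(Frob) K`. -/
lemma index_rhoA {P : F[X]} (hm : P.Monic) (hP : P ∣ X ^ Module.finrank F K - 1) :
    (mulRange (rhoA F K) P).index = Fintype.card F ^ P.natDegree := by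
  obtain ⟨w, hw⟩ := exists_NB F K
  let Φ : degreeLT F P.natDegree → K ⧸ mulRange (rhoA F K) P :=
    fun f => QuotientAddGroup.mk (aeval (fr F K) (f : F[X]) w)
  have hinj : Function.Injective Φ := by
    intro f g hfg
    obtain ⟨y, hy⟩ := (mem_rhoA P _).1 (QuotientAddGroup.eq.1 hfg)
    obtain ⟨h, rfl⟩ := hw.exists_aeval y
    have h1 : aeval (fr F K) (P * h + (f : F[X]) - (g : F[X])) w = 0 := by
      rw [map_sub, map_add, map_mul, LinearMap.sub_apply, LinearMap.add_apply, Module.End.mul_apply, hy]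
      abel
    have h2 := (hP.trans (hw.dvd h1))
    have h3 : P ∣ ((f : F[X]) - (g : F[X])) := by
      have : ((f : F[X]) - (g : F[X])) = (P * h + (f : F[X]) - (g : F[X])) - P * h := by ring
      rw [this]
      exact dvd_sub h2 (dvd_mul_right _ _)
    have h4 : ((f : F[X]) - g).degree < P.natDegree := mem_degreeLT.1 (f - g).2
    rw [← degree_eq_natDegree hm.ne_zero] at h4
    exact Subtype.ext (sub_eq_zero.1 (eq_zero_of_dvd_of_degree_lt h3 h4))
  have hsur : Function.Surjective Φ := by
    intro z
    obtain ⟨x, rfl⟩ := QuotientAddGroup.mk_surjective z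
    obtain ⟨g, rfl⟩ := hw.exists_aeval x
    refine ⟨⟨g %ₘ P, mem_degreeLT.2 ?_⟩, ?_⟩
    · rw [← degree_eq_natDegree hm.ne_zero]
      exact degree_modByMonic_lt g hm
    · refine QuotientAddGroup.eq.2 ((mem_rhoA P _).2 ⟨aeval (fr F K) (g /ₘ P) w, ?_⟩)
      have e : aeval (fr F K) g w = aeval (fr F K) (g %ₘ P) w + aeval (fr F K) (P * (g /ₘ P)) w := by
        rw [← LinearMap.add_apply, ← map_add, modByMonic_add_div]
      rw [← Module.End.mul_apply, ← map_mul, e]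
      abel
  rw [AddSubgroup.index, ← Nat.card_congr (Equiv.ofBijective Φ ⟨hinj, hsur⟩),
    Nat.card_congr (degreeLTEquiv F P.natDegree).toEquiv, Nat.card_eq_fintype_card]
  simp

/-- Write `w = b(Frob) w0` with `w0` normal. By assumption no irreducible factor of `X ^ n - 1` divides `b`,
so `b` and `X ^ n - 1` are coprime and `w` has the same annihilator as `w0`. -/
lemma NB.of_notMem {w : K} (h : ∀ P ∈ pset F (Module.finrank F K), w ∉ mulRange (rhoA F K) P) :
    NB F K w := by
  obtain ⟨w0, hw0⟩ := exists_NB F K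
  obtain ⟨b, rfl⟩ := hw0.exists_aeval w
  refine NB.of_dvd fun f hf => ?_
  rw [← Module.End.mul_apply, ← map_mul] at hf
  have hd := hw0.dvd hf
  refine IsCoprime.dvd_of_dvd_mul_right ?_ hd
  by_contra hco
  obtain ⟨p, hp, h1, h2⟩ : ∃ p : F[X], Prime p ∧ p ∣ X ^ Module.finrank F K - 1 ∧ p ∣ b := by
    by_contra! hcon
    exact hco ((isCoprime_of_prime_dvd (fun hh => X_pow_sub_one_ne_zero F (finrank_pos' F K) hh.1)
      fun p hp h1 h2 => hcon p hp h1 h2))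
  have h0 := hp.ne_zero
  classical
  have ha : Associated (normalize p) p := normalize_associated p
  refine h (normalize p) ((mem_pset (finrank_pos' F K)).2 ⟨ha.symm.irreducible hp.irreducible, monic_normalize h0,
    ha.dvd.trans h1⟩) ?_
  obtain ⟨c, rfl⟩ := ha.dvd.trans h2
  rw [mem_rhoA]
  exact ⟨aeval (fr F K) c w0, by rw [map_mul]; rfl⟩
end

/-! ### Criteria for primitive normal elements -/

/-- The number `(q ^ n - 1) / ((q - 1) * gcd (n, q - 1))` (see `QQ_mul`). Thanks to `twist`, only its prime
divisors matter for primitivity. -/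
def QQ (q n : ℕ) : ℕ := (∑ i ∈ range n, q ^ i) / n.gcd (q - 1)

lemma geom_modEq {q d : ℕ} (m : ℕ) (h : q ≡ 1 [MOD d]) : ∑ i ∈ range m, q ^ i ≡ m [MOD d] := by
  induction m with
  | zero => rfl
  | succ m ih =>
    rw [Finset.sum_range_succ]
    exact ih.add (by simpa using h.pow m)

lemma gcd_dvd_geom (q n : ℕ) (hq : 1 < q) : n.gcd (q - 1) ∣ ∑ i ∈ range n, q ^ i := by
  have h : ∑ i ∈ range n, q ^ i ≡ n [MOD n.gcd (q - 1)] := by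
    have h1 : q ≡ 1 [MOD n.gcd (q - 1)] :=
      ((Nat.modEq_iff_dvd' hq.le).2 (Nat.gcd_dvd_right n (q - 1))).symm
    exact geom_modEq n h1
  exact (Nat.modEq_zero_iff_dvd).1 (h.trans ((Nat.modEq_zero_iff_dvd).2 (Nat.gcd_dvd_left n _)))

lemma QQ_mul (q n : ℕ) (hq : 1 < q) : QQ q n * ((q - 1) * n.gcd (q - 1)) = q ^ n - 1 := by
  have h := Nat.div_mul_cancel (gcd_dvd_geom q n hq)
  have h2 := Nat.geomSum_eq hq n
  have h3 : (∑ i ∈ range n, q ^ i) * (q - 1) = q ^ n - 1 := by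
    rw [h2]; exact Nat.div_mul_cancel (Nat.sub_one_dvd_pow_sub_one q n)
  rw [← h3, ← h, QQ]; ring

section
variable (F K : Type*) [Field F] [Fintype F] [Field K] [Fintype K] [Algebra F K]

/-- `K` contains a primitive element that is normal over `F`. -/
def Good : Prop := ∃ η : K, η ≠ 0 ∧
  orderOf η = Fintype.card F ^ Module.finrank F K - 1 ∧ NB F K η

lemma card_units' : Nat.card Kˣ = Fintype.card F ^ Module.finrank F K - 1 := by
  rw [Nat.card_units, Nat.card_eq_fintype_card, card_K F K]

variable {F K} in
/-- It suffices to find a unit that is not an `l`-th power for the primes `l ∣ QQ q n` and does not lie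
in `P(Frob) K` for the irreducible factors `P` of `X ^ n - 1`. Such a unit is normal, and
`exists_generator` provides a multiple of it that is primitive and, by `twist`, still normal. -/
theorem Good.of_unit (u : Kˣ)
    (h1 : ∀ l ∈ (QQ (Fintype.card F) (Module.finrank F K)).primeFactors,
      Additive.ofMul u ∉ mulRange (rhoM K) (l : ℤ))
    (h2 : ∀ P ∈ pset F (Module.finrank F K), (u : K) ∉ mulRange (rhoA F K) P) : Good F K := by
  set q := Fintype.card F with hq
  set n := Module.finrank F K with hn
  have hq1 : 1 < q := Fintype.one_lt_card
  have hN : Nat.card Kˣ = QQ q n * ((q - 1) * n.gcd (q - 1)) := by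
    rw [QQ_mul q n hq1, card_units' F K]
  have hQ0 : QQ q n ≠ 0 := by
    intro h
    rw [h, zero_mul] at hN
    exact Nat.card_pos.ne' hN
  obtain ⟨γ, hγ, ho⟩ := exists_generator _ _ hN u fun l hl hlQ => by
    rw [← mem_rhoM]
    exact h1 l (Nat.mem_primeFactors.2 ⟨hl, hlQ, hQ0⟩)
  refine ⟨((γ * u : Kˣ) : K), Units.ne_zero _, ?_, ?_⟩
  · rw [orderOf_units, ho, card_units' F K]
  · rw [Units.val_mul]
    refine twist F K _ (n.gcd (q - 1)) (Nat.gcd_dvd_right _ _) _ _ (Units.ne_zero _) ?_ (NB.of_notMem h2)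
    rw [← Units.val_pow_eq_pow_val, hγ, Units.val_one]

variable {F K} in
/-- The criterion given by `sieve`. The subgroup of `l`-th powers has index `l`, and `P(Frob) K` has index
`q ^ deg P`. -/
theorem Good.of_sieve [DecidableEq F[X]] {q n : ℕ} (hq : Fintype.card F = q) (hn : Module.finrank F K = n)
    (A A' : Finset ℕ) (B B' : Finset F[X])
    (hA : A ∪ A' = (QQ q n).primeFactors) (hB : B ∪ B' = pset F n)
    (dA : Disjoint A A') (dB : Disjoint B B') (hne : B.Nonempty) (δ : ℝ) (hδ0 : 0 ≤ δ)
    (hδ : δ = 1 - ∑ l ∈ A', (l : ℝ)⁻¹ - ∑ P ∈ B', ((q : ℝ) ^ P.natDegree)⁻¹)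
    (hmain : (∑ l ∈ A', (1 - (l : ℝ)⁻¹)) * (2 ^ A.card * (2 ^ B.card - 1)) +
      (∑ P ∈ B', (1 - ((q : ℝ) ^ P.natDegree)⁻¹)) * ((2 ^ A.card - 1) * 2 ^ B.card) <
      δ * (√((q : ℝ) ^ n) - (2 ^ A.card - 1) * (2 ^ B.card - 1))) : Good F K := by
  subst hq hn
  set q := Fintype.card F with hq
  set n := Module.finrank F K with hn
  have hq1 : 1 < q := Fintype.one_lt_card
  have hnpos : 0 < n := finrank_pos' F K
  have iM : ∀ l ∈ A ∪ A', (mulRange (rhoM K) (l : ℤ)).index = l := by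
    intro l hl
    refine index_rhoM K l ?_
    rw [card_units' F K, ← hq, ← hn, ← QQ_mul q n hq1]
    exact (Nat.dvd_of_mem_primeFactors (hA ▸ hl)).mul_right _
  have iA : ∀ P ∈ B ∪ B', (mulRange (rhoA F K) P).index = q ^ P.natDegree := by
    intro P hP
    obtain ⟨-, hm, hd⟩ := (mem_pset hnpos).1 (hB ▸ hP)
    exact index_rhoA hm hd
  let e : ℕ ↪ ℤ := Nat.castEmbedding
  have key := sieve (rhoM K) (rhoA F K) (A.map e) (A'.map e) B B' ?_ ?_ ?_ dB ?_ ?_ hne δ hδ0 ?_ ?_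
  · obtain ⟨u, h1, h2⟩ := key
    refine Good.of_unit u (fun l hl => h1 _ ?_) (hB ▸ h2)
    rw [← Finset.map_union, hA]
    exact Finset.mem_map_of_mem e hl
  · rw [← Finset.map_union, hA]
    rintro _ hl _ hl' hne'
    obtain ⟨l, h, rfl⟩ := Finset.mem_map.1 hl
    obtain ⟨l', h', rfl⟩ := Finset.mem_map.1 hl'
    refine Nat.isCoprime_iff_coprime.2 ((Nat.coprime_primes (Nat.prime_of_mem_primeFactors h)
      (Nat.prime_of_mem_primeFactors h')).2 fun h => hne' (by rw [h]))
  · rw [hB]; exact pset_coprime F hnpos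
  · exact (Finset.disjoint_map e).2 dA
  · intro r hr
    obtain ⟨l, h, rfl⟩ := Finset.mem_map.1 hr
    have h' : l ∈ A ∪ A' := Finset.mem_union_left _ h
    change 2 ≤ (mulRange (rhoM K) (l : ℤ)).index
    rw [iM l h']
    exact (Nat.prime_of_mem_primeFactors (hA ▸ h')).two_le
  · intro P hP
    rw [iA P (Finset.mem_union_left _ hP)]
    have hi := ((mem_pset hnpos).1 (hB ▸ Finset.mem_union_left B' hP)).1
    calc 2 ≤ q := hq1
      _ = q ^ 1 := (pow_one q).symm
      _ ≤ _ := Nat.pow_le_pow_right hq1.le hi.natDegree_pos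
  · rw [hδ, Finset.sum_map]
    congr 1
    · congr 1
      refine Finset.sum_congr rfl fun l hl => ?_
      change _ = ((mulRange (rhoM K) (l : ℤ)).index : ℝ)⁻¹
      rw [iM l (Finset.mem_union_right _ hl)]
    · refine Finset.sum_congr rfl fun P hP => ?_
      rw [iA P (Finset.mem_union_right _ hP)]; push_cast; rfl
  · rw [Finset.sum_map, Finset.card_map]
    have e1 : ∑ l ∈ A', dens (rhoM K) (e l) = ∑ l ∈ A', (1 - (l : ℝ)⁻¹) := by
      refine Finset.sum_congr rfl fun l hl => ?_
      change 1 - ((mulRange (rhoM K) (l : ℤ)).index : ℝ)⁻¹ = _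
      rw [iM l (Finset.mem_union_right _ hl)]
    have e2 : ∑ P ∈ B', dens (rhoA F K) P = ∑ P ∈ B', (1 - ((q : ℝ) ^ P.natDegree)⁻¹) := by
      refine Finset.sum_congr rfl fun P hP => ?_
      rw [dens, iA P (Finset.mem_union_right _ hP)]; push_cast; rfl
    rw [e1, e2, card_K F K]
    push_cast
    exact hmain

variable {F K} in
/-- The criterion given by the sieve with no sieved subgroups: the number of characters involved is too
small for the Gauss sums to cancel the main term. -/
theorem Good.of_card {q n : ℕ} (hq : Fintype.card F = q) (hn : Module.finrank F K = n)
    (h : (2 ^ (QQ q n).primeFactors.card - 1) ^ 2 * (2 ^ (pset F n).card - 1) ^ 2 < q ^ n) : Good F K := by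
  classical
  have hnpos : 0 < n := hn ▸ finrank_pos' F K
  have hne : (pset F n).Nonempty := by
    have hX : (X - 1 : F[X]) = X - C 1 := by simp
    refine ⟨X - 1, (mem_pset hnpos).2 ⟨hX ▸ irreducible_X_sub_C 1, hX ▸ monic_X_sub_C 1, ?_⟩⟩
    simpa using sub_dvd_pow_sub_pow (X : F[X]) 1 n
  refine Good.of_sieve hq hn (QQ q n).primeFactors ∅ (pset F n) ∅ (by simp) (by simp) (by simp) (by simp)
    hne 1 zero_le_one (by simp) ?_
  simp only [Finset.sum_empty, zero_mul, add_zero, one_mul, sub_pos]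
  refine Real.lt_sqrt_of_sq_lt ?_
  have h1 : 1 ≤ 2 ^ (QQ q n).primeFactors.card := Nat.one_le_two_pow
  have h2 : 1 ≤ 2 ^ (pset F n).card := Nat.one_le_two_pow
  have := (Nat.cast_lt (α := ℝ)).2 h
  push_cast [h1, h2] at this
  rw [mul_pow]
  exact this
end

/-! ### Counting prime divisors and irreducible factors -/

/-- Dividing `Q` by its prime divisors less than `B` leaves a multiple of the product of the others,
each of which is at least `B`. -/
lemma omega_bound {Q B : ℕ} (hQ : Q ≠ 0) (S : Finset ℕ)
    (hS : S = Q.primeFactors.filter (· < B)) :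
    B ^ (Q.primeFactors.card - S.card) ≤ Q / ∏ p ∈ S, p := by
  have hsub : S ⊆ Q.primeFactors := hS ▸ Finset.filter_subset _ _
  have hpos : 0 < ∏ p ∈ S, p := Finset.prod_pos fun p hp => (Nat.prime_of_mem_primeFactors (hsub hp)).pos
  rw [Nat.le_div_iff_mul_le hpos]
  calc B ^ (Q.primeFactors.card - S.card) * ∏ p ∈ S, p
      = (∏ p ∈ Q.primeFactors \ S, B) * ∏ p ∈ S, p := by
        rw [Finset.prod_const, Finset.card_sdiff_of_subset hsub]
    _ ≤ (∏ p ∈ Q.primeFactors \ S, p) * ∏ p ∈ S, p := by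
        refine Nat.mul_le_mul_right _ (Finset.prod_le_prod' fun p hp => ?_)
        rw [Finset.mem_sdiff, hS, Finset.mem_filter] at hp
        by_contra h
        exact hp.2 ⟨hp.1, not_le.1 h⟩
    _ = ∏ p ∈ Q.primeFactors, p := Finset.prod_sdiff hsub
    _ ≤ Q := Nat.le_of_dvd (Nat.pos_of_ne_zero hQ) (Nat.prod_primeFactors_dvd Q)

/-- Replacing each of the primes `2, ..., 13`, whose product is `30030`, by `16` gives lower bounds for all
primes, at the cost of the factor `16 ^ 6 / 30030`. -/
lemma omega_bound16 {Q : ℕ} (hQ : Q ≠ 0) : 30030 * 16 ^ Q.primeFactors.card ≤ 2 ^ 24 * Q := by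
  set P := Q.primeFactors with hP
  let T : Finset ℕ := {2, 3, 5, 7, 11, 13}
  have hT : ∀ p ∈ P, p ∉ T → 16 ≤ p := by
    intro p hp hpT
    have := Nat.prime_of_mem_primeFactors hp
    by_contra h
    simp only [T, Finset.mem_insert, Finset.mem_singleton, not_or] at hpT
    interval_cases p <;> first | omega | (revert this; decide)
  have h1 : 16 ^ (P \ T).card ≤ ∏ p ∈ P \ T, p := by
    rw [← Finset.prod_const]
    exact Finset.prod_le_prod' fun p hp => hT p (Finset.mem_sdiff.1 hp).1 (Finset.mem_sdiff.1 hp).2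
  have h2 : ∏ p ∈ T \ P, p ≤ 16 ^ (T \ P).card := by
    rw [← Finset.prod_const]
    refine Finset.prod_le_prod' fun p hp => ?_
    have := (Finset.mem_sdiff.1 hp).1
    simp only [T, Finset.mem_insert, Finset.mem_singleton] at this
    omega
  have h3 : ∏ p ∈ P, p ≤ Q := Nat.le_of_dvd (Nat.pos_of_ne_zero hQ) (Nat.prod_primeFactors_dvd Q)
  have e1 : ∏ p ∈ P, p = (∏ p ∈ P \ T, p) * ∏ p ∈ P ∩ T, p := by
    rw [mul_comm, Finset.prod_inter_mul_prod_sdiff]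
  have e2 : 30030 = (∏ p ∈ T \ P, p) * ∏ p ∈ P ∩ T, p := by
    rw [Finset.inter_comm, mul_comm, Finset.prod_inter_mul_prod_sdiff]; rfl
  have e3 : P.card = (P \ T).card + (P ∩ T).card := (Finset.card_sdiff_add_card_inter _ _).symm
  have e4 : (T \ P).card + (P ∩ T).card = 6 := by
    rw [Finset.inter_comm, Finset.card_sdiff_add_card_inter]; rfl
  calc 30030 * 16 ^ P.card = (∏ p ∈ T \ P, p) * (∏ p ∈ P ∩ T, p) * (16 ^ (P \ T).card * 16 ^ (P ∩ T).card) := by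
        rw [← e2, e3, pow_add]
    _ ≤ 16 ^ (T \ P).card * (∏ p ∈ P ∩ T, p) * ((∏ p ∈ P \ T, p) * 16 ^ (P ∩ T).card) := by gcongr
    _ = (16 ^ ((T \ P).card + (P ∩ T).card)) * ((∏ p ∈ P \ T, p) * ∏ p ∈ P ∩ T, p) := by rw [pow_add]; ring
    _ ≤ 2 ^ 24 * Q := by
      rw [e4, ← e1, show 16 ^ 6 = 2 ^ 24 by norm_num]
      exact Nat.mul_le_mul_left _ h3

section
variable {F : Type*} [Field F]

/-- In characteristic `p`, the polynomial `X ^ (p ^ k * n0) - 1` is a `p ^ k`-th power. -/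
lemma pset_pow (p k n0 : ℕ) [Fact p.Prime] [CharP F p] : pset F (p ^ k * n0) = pset F n0 := by
  classical
  have : (X ^ (p ^ k * n0) - 1 : F[X]) = (X ^ n0 - 1) ^ p ^ k := by
    rw [sub_pow_char_pow, one_pow, ← pow_mul, mul_comm]
  rw [pset, pset, this, UniqueFactorizationMonoid.primeFactors_pow]
  exact (pow_pos (Fact.out : p.Prime).pos _).ne'

lemma sum_degree_pset {n0 : ℕ} (h0 : (n0 : F) ≠ 0) : ∑ P ∈ pset F n0, P.natDegree = n0 := by
  classical
  have hpos : 0 < n0 := Nat.pos_of_ne_zero fun h => h0 (by simp [h])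
  have hsq : Squarefree (X ^ n0 - 1 : F[X]) := (X_pow_sub_one_separable_iff.2 h0).squarefree
  have hne := X_pow_sub_one_ne_zero F hpos
  have hprod : ∏ P ∈ pset F n0, P = X ^ n0 - 1 := by
    refine eq_of_monic_of_associated (monic_prod_of_monic _ _ fun P hP => ((mem_pset hpos).1 hP).2.1)
      (monic_X_pow_sub_C 1 hpos.ne') ?_
    have := UniqueFactorizationMonoid.radical_associated hsq.isRadical hne
    exact this
  have := congrArg natDegree hprod
  rw [natDegree_prod_of_monic _ _ fun P hP => ((mem_pset hpos).1 hP).2.1] at this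
  rw [this]
  exact natDegree_X_pow_sub_C

variable [Fintype F]

/-- The irreducible factors of `X ^ n0 - 1` of degree dividing `d` are those that divide
`X ^ (q ^ d) - X`, that is, those that divide `X ^ gcd (n0, q ^ d - 1) - 1`. -/
lemma pset_filter {n0 d : ℕ} (h0 : 0 < n0) :
    (pset F n0).filter (fun P => P.natDegree ∣ d) = pset F (n0.gcd (Fintype.card F ^ d - 1)) := by
  have hG : 0 < n0.gcd (Fintype.card F ^ d - 1) := Nat.gcd_pos_of_pos_left _ h0
  have hX : (X ^ Fintype.card F ^ d - X : F[X]) = X * (X ^ (Fintype.card F ^ d - 1) - 1) := by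
    rw [mul_sub, ← pow_succ', mul_one, Nat.sub_add_cancel]
    exact Nat.one_le_pow _ _ Fintype.card_pos
  ext P
  rw [Finset.mem_filter, mem_pset h0, mem_pset hG]
  constructor
  · rintro ⟨⟨hi, hm, hd⟩, hdeg⟩
    refine ⟨hi, hm, ?_⟩
    rw [hi.natDegree_dvd_iff_dvd_X_pow_card_pow_sub_X, Nat.card_eq_fintype_card, hX] at hdeg
    have hnX : ¬ P ∣ X := by
      intro h
      have : P ∣ 1 := by
        have h2 := dvd_sub (h.trans (dvd_pow_self X h0.ne')) hd
        simpa using h2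
      exact hi.not_isUnit (isUnit_of_dvd_one this)
    have h3 := (hi.prime.dvd_or_dvd hdeg).resolve_left hnX
    have key : ∀ m, P ∣ X ^ m - 1 ↔ (AdjoinRoot.mk P X) ^ m = 1 := by
      intro m
      rw [← AdjoinRoot.mk_eq_zero, map_sub, map_pow, map_one, sub_eq_zero]
    rw [key] at *
    exact (pow_gcd_eq_one ..).2 ⟨hd, h3⟩
  · rintro ⟨hi, hm, hd⟩
    refine ⟨⟨hi, hm, hd.trans ?_⟩, ?_⟩
    · obtain ⟨c, hc⟩ := Nat.gcd_dvd_left n0 (Fintype.card F ^ d - 1)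
      conv_rhs => rw [hc, pow_mul]
      exact sub_one_dvd_pow_sub_one _ _
    · rw [hi.natDegree_dvd_iff_dvd_X_pow_card_pow_sub_X, Nat.card_eq_fintype_card, hX]
      refine (hd.trans ?_).mul_left _
      obtain ⟨c, hc⟩ := Nat.gcd_dvd_right n0 (Fintype.card F ^ d - 1)
      conv_rhs => rw [hc, pow_mul]
      exact sub_one_dvd_pow_sub_one _ _

/-- The number of monic irreducible factors of `X ^ n0 - 1` of degree `d`. -/
noncomputable def Nd (F : Type*) [Field F] (n0 d : ℕ) : ℕ := ((pset F n0).filter (fun P => P.natDegree = d)).card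

lemma sum_Nd {n0 d : ℕ} (h0 : (n0 : F) ≠ 0) (hd : d ≠ 0) :
    ∑ e ∈ d.divisors, e * Nd F n0 e = n0.gcd (Fintype.card F ^ d - 1) := by
  classical
  have hpos : 0 < n0 := Nat.pos_of_ne_zero fun h => h0 (by simp [h])
  have h1 : ((n0.gcd (Fintype.card F ^ d - 1) : ℕ) : F) ≠ 0 := by
    intro h
    obtain ⟨c, hc⟩ := Nat.gcd_dvd_left n0 (Fintype.card F ^ d - 1)
    apply h0
    rw [hc, Nat.cast_mul, h, zero_mul]
  have h2 := sum_degree_pset h1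
  rw [← pset_filter hpos, ← Finset.sum_fiberwise_of_maps_to (t := d.divisors)
    (g := fun P : F[X] => P.natDegree) fun P hP => Nat.mem_divisors.2 ⟨(Finset.mem_filter.1 hP).2, hd⟩] at h2
  conv_rhs => rw [← h2]
  refine Finset.sum_congr rfl fun e he => ?_
  rw [Finset.sum_congr rfl (g := fun _ => e) fun P hP => (Finset.mem_filter.1 hP).2, Finset.sum_const,
    smul_eq_mul, mul_comm, Nd, Finset.filter_filter]
  congr 2
  ext P
  simp only [Finset.mem_filter]
  constructor
  · rintro ⟨h, rfl⟩; exact ⟨h, Nat.dvd_of_mem_divisors he, rfl⟩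
  · rintro ⟨h, -, hdeg⟩; exact ⟨h, hdeg⟩

/-- A factor of degree `d < D` is counted with weight `d + (D - d)`, and the others have degree at least `D`. -/
lemma card_pset_bound {n0 : ℕ} (h0 : (n0 : F) ≠ 0) (D : ℕ) :
    D * (pset F n0).card ≤ n0 + ∑ d ∈ Finset.Ico 1 D, (D - d) * Nd F n0 d := by
  classical
  have hpos : 0 < n0 := Nat.pos_of_ne_zero fun h => h0 (by simp [h])
  have e : ∑ d ∈ Finset.Ico 1 D, (D - d) * Nd F n0 d = ∑ P ∈ pset F n0, (D - P.natDegree) := by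
    have : ∀ d, (D - d) * Nd F n0 d = ∑ P ∈ pset F n0, if P.natDegree = d then D - d else 0 := by
      intro d
      rw [← Finset.sum_filter, Finset.sum_const, smul_eq_mul, mul_comm, Nd]
    simp_rw [this]
    rw [Finset.sum_comm]
    refine Finset.sum_congr rfl fun P hP => ?_
    have := ((mem_pset hpos).1 hP).1.natDegree_pos
    rw [Finset.sum_ite_eq]
    split_ifs with h
    · rfl
    · rw [Finset.mem_Ico] at h; omega
  rw [e]
  have hs := sum_degree_pset h0
  calc D * (pset F n0).card = ∑ P ∈ pset F n0, D := by rw [Finset.sum_const, smul_eq_mul, mul_comm]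
    _ ≤ ∑ P ∈ pset F n0, (P.natDegree + (D - P.natDegree)) := Finset.sum_le_sum fun P _ => by omega
    _ = _ := by rw [Finset.sum_add_distrib, hs]

lemma Nd_rel {n0 : ℕ} (h0 : (n0 : F) ≠ 0) {q : ℕ} (hq : Fintype.card F = q) :
    Nd F n0 1 = n0.gcd (q - 1) ∧ Nd F n0 1 + 2 * Nd F n0 2 = n0.gcd (q ^ 2 - 1) ∧
    Nd F n0 1 + 3 * Nd F n0 3 = n0.gcd (q ^ 3 - 1) ∧
    Nd F n0 1 + 2 * Nd F n0 2 + 4 * Nd F n0 4 = n0.gcd (q ^ 4 - 1) ∧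
    Nd F n0 1 + 5 * Nd F n0 5 = n0.gcd (q ^ 5 - 1) := by
  subst hq
  have d1 : Nat.divisors 1 = {1} := by decide
  have d2 : Nat.divisors 2 = {1, 2} := by decide
  have d3 : Nat.divisors 3 = {1, 3} := by decide
  have d4 : Nat.divisors 4 = {1, 2, 4} := by decide
  have d5 : Nat.divisors 5 = {1, 5} := by decide
  have h1 := sum_Nd h0 (d := 1) (by norm_num)
  have h2 := sum_Nd h0 (d := 2) (by norm_num)
  have h3 := sum_Nd h0 (d := 3) (by norm_num)
  have h4 := sum_Nd h0 (d := 4) (by norm_num)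
  have h5 := sum_Nd h0 (d := 5) (by norm_num)
  rw [d1, Finset.sum_singleton, pow_one, one_mul] at h1
  rw [d2, Finset.sum_pair (by norm_num), one_mul] at h2
  rw [d3, Finset.sum_pair (by norm_num), one_mul] at h3
  rw [d5, Finset.sum_pair (by norm_num), one_mul] at h5
  rw [d4, Finset.sum_insert (by decide), Finset.sum_pair (by norm_num), one_mul, ← add_assoc] at h4
  exact ⟨h1, h2, h3, h4, h5⟩
end

/-! ### Large degrees, large fields and the generic small cases -/

section
variable {F K : Type*} [Field F] [Fintype F] [Field K] [Fintype K] [Algebra F K]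

/-- The characteristic `p` of `F` splits `n` as `p ^ k * n0` with `p ∤ n0`, and only `n0` matters for
the irreducible factors of `X ^ n - 1`. -/
lemma exists_param (F : Type*) [Field F] [Fintype F] {n : ℕ} (hn : 0 < n) :
    ∃ p m k n0 : ℕ, p.Prime ∧ 0 < m ∧ Fintype.card F = p ^ m ∧ n = p ^ k * n0 ∧ ¬ p ∣ n0 ∧
      (n0 : F) ≠ 0 ∧ pset F n = pset F n0 := by
  obtain ⟨p, hp⟩ := CharP.exists F
  obtain ⟨m, hpp, hm⟩ := FiniteField.card F p
  obtain ⟨k, n0, h0, hk⟩ := Nat.exists_eq_pow_mul_and_not_dvd hn.ne' p hpp.ne_one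
  have : Fact p.Prime := ⟨hpp⟩
  refine ⟨p, m, k, n0, hpp, m.pos, hm, hk, h0, ?_, ?_⟩
  · rwa [Ne, CharP.cast_eq_zero_iff F p]
  · rw [hk, pset_pow]

lemma sub_one_sq_le (a : ℕ) : (2 ^ a - 1) ^ 2 < 4 ^ a := by
  have h : 0 < 2 ^ a := by positivity
  calc (2 ^ a - 1) ^ 2 < (2 ^ a) ^ 2 := Nat.pow_lt_pow_left (by omega) (by norm_num)
    _ = 4 ^ a := by rw [← pow_mul, mul_comm, pow_mul]; norm_num

lemma Good.of_four_pow {q n : ℕ} (hq : Fintype.card F = q) (hn : Module.finrank F K = n)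
    (h : 4 ^ (QQ q n).primeFactors.card * 4 ^ (pset F n).card ≤ q ^ n) : Good F K :=
  Good.of_card hq hn (lt_of_lt_of_le (Nat.mul_lt_mul'' (sub_one_sq_le _) (sub_one_sq_le _)) h)

/-- Bounding the number of primes dividing `QQ q n` by `omega_bound16`, it remains to control
the number of irreducible factors of `X ^ n - 1`. -/
lemma Good.of_bound {q n : ℕ} (hq : Fintype.card F = q) (hn : Module.finrank F K = n)
    (h : 2 ^ 24 * 16 ^ (pset F n).card ≤ 30030 * ((q - 1) * n.gcd (q - 1)) * q ^ n) : Good F K := by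
  have hq1 : 1 < q := hq ▸ Fintype.one_lt_card
  have hnpos : 0 < n := hn ▸ finrank_pos' F K
  have hQ := QQ_mul q n hq1
  have hqn : 1 < q ^ n := Nat.one_lt_pow hnpos.ne' hq1
  have hQ0 : QQ q n ≠ 0 := by
    intro h0; rw [h0, zero_mul] at hQ; omega
  have hc : 0 < (q - 1) * n.gcd (q - 1) := by
    refine Nat.mul_pos (by omega) (Nat.gcd_pos_of_pos_left _ hnpos)
  have h16 := omega_bound16 hQ0
  apply Good.of_four_pow hq hn
  set c := (q - 1) * n.gcd (q - 1)
  set a := (QQ q n).primeFactors.card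
  set w := (pset F n).card
  rw [← Nat.pow_le_pow_iff_left (n := 2) (by norm_num)]
  refine Nat.le_of_mul_le_mul_left (c := 30030 * c) ?_ (by positivity)
  have e : ∀ b : ℕ, (4 ^ b) ^ 2 = 16 ^ b := fun b => by rw [← pow_mul, mul_comm, pow_mul]; norm_num
  calc 30030 * c * (4 ^ a * 4 ^ w) ^ 2 = (30030 * 16 ^ a) * (c * 16 ^ w) := by
        rw [mul_pow, e, e]; ring
    _ ≤ (2 ^ 24 * QQ q n) * (c * 16 ^ w) := Nat.mul_le_mul_right _ h16
    _ = (QQ q n * c) * (2 ^ 24 * 16 ^ w) := by ring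
    _ ≤ q ^ n * (30030 * c * q ^ n) := Nat.mul_le_mul (by omega) h
    _ = 30030 * c * (q ^ n) ^ 2 := by ring

/-- Bounding the degree of nonlinear factors below by `2` gives `2 w ≤ n + g`, with `g = gcd (n, q - 1)`. Either
`g = n`, and the factor `(q - 1) * g` helps, or `2 * g ≤ n`, and `w` is at most `3 n / 4`. -/
lemma Good.of_large_card {q n : ℕ} (hq : Fintype.card F = q) (hn : Module.finrank F K = n)
    (hn3 : 3 ≤ n) (hq32 : 32 ≤ q) : Good F K := by
  obtain ⟨p, m, k, n0, hp, hm, hcard, hnk, hn0, hF, hset⟩ := exists_param F (n := n) (by omega)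
  apply Good.of_bound hq hn
  rw [hset]
  have hle := card_pset_bound hF 2
  have hN := (Nd_rel hF hq).1
  rw [show Finset.Ico 1 2 = {1} from rfl, Finset.sum_singleton, hN, show 2 - 1 = 1 from rfl, one_mul] at hle
  have hd : n0 ∣ n := ⟨p ^ k, by rw [hnk, mul_comm]⟩
  have hn0n : n0 ≤ n := Nat.le_of_dvd (by omega) hd
  have hg : n0.gcd (q - 1) ≤ n.gcd (q - 1) :=
    Nat.le_of_dvd (Nat.gcd_pos_of_pos_left _ (by omega)) (Nat.gcd_dvd_gcd_of_dvd_left _ hd)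
  set g := n.gcd (q - 1) with hgdef
  set w := (pset F n0).card
  have hgn : g ∣ n := Nat.gcd_dvd_left _ _
  have hgpos : 0 < g := Nat.gcd_pos_of_pos_left _ (by omega)
  have h16 : 16 ^ w ≤ 4 ^ (n + g) := by
    rw [show 16 = 4 ^ 2 from rfl, ← pow_mul]
    exact Nat.pow_le_pow_right (by norm_num) (by omega)
  have hqn : 32 ^ n ≤ q ^ n := Nat.pow_le_pow_left hq32 n
  have h31 : 31 ≤ q - 1 := by omega
  obtain ⟨c, hc⟩ := hgn
  rcases Nat.lt_or_ge c 2 with h2 | h2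
  · have hc1 : c = 1 := by
      have : c ≠ 0 := by rintro rfl; omega
      omega
    have hgn : g = n := by rw [hc, hc1, mul_one]
    have h2n : 8 ≤ 2 ^ n := le_trans (by norm_num) (Nat.pow_le_pow_right (n := 2) (by norm_num) hn3)
    calc 2 ^ 24 * 16 ^ w ≤ 2 ^ 24 * 4 ^ (n + g) := Nat.mul_le_mul_left _ h16
      _ = 2 ^ 24 * 16 ^ n := by rw [hgn, ← two_mul, pow_mul]; norm_num
      _ ≤ (30030 * (31 * 3) * 8) * 16 ^ n := Nat.mul_le_mul_right _ (by norm_num)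
      _ ≤ (30030 * (31 * 3) * 2 ^ n) * 16 ^ n := by gcongr
      _ = 30030 * (31 * 3) * 32 ^ n := by rw [mul_assoc, ← mul_pow]; norm_num
      _ ≤ 30030 * ((q - 1) * g) * q ^ n := by rw [hgn]; gcongr
  · have hgn : 2 * (n + g) ≤ 3 * n := by
      have := Nat.mul_le_mul_left g h2
      omega
    have h4n : 64 ≤ 4 ^ n := le_trans (by norm_num) (Nat.pow_le_pow_right (n := 4) (by norm_num) hn3)
    have h8 : 4 ^ (n + g) ≤ 8 ^ n := by
      rw [show 4 = 2 ^ 2 from rfl, show 8 = 2 ^ 3 from rfl, ← pow_mul, ← pow_mul]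
      exact Nat.pow_le_pow_right (by norm_num) hgn
    calc 2 ^ 24 * 16 ^ w ≤ 2 ^ 24 * 8 ^ n := Nat.mul_le_mul_left _ (h16.trans h8)
      _ ≤ (30030 * (31 * 1) * 64) * 8 ^ n := Nat.mul_le_mul_right _ (by norm_num)
      _ ≤ (30030 * (31 * 1) * 4 ^ n) * 8 ^ n := by gcongr
      _ = 30030 * (31 * 1) * 32 ^ n := by rw [mul_assoc, ← mul_pow]; norm_num
      _ ≤ 30030 * ((q - 1) * g) * q ^ n := by gcongr; omega

/-- The inequality, once true for `n = 100`, persists since `16 ≤ q ^ D`. -/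
lemma pow_growth {D C q n : ℕ} (hn : 100 ≤ n) (hD : 16 ≤ q ^ D)
    (hbase : 2 ^ (24 * D) * 16 ^ (100 + C) ≤ 30030 ^ D * (q ^ D) ^ 100) :
    2 ^ (24 * D) * 16 ^ (n + C) ≤ 30030 ^ D * (q ^ D) ^ n := by
  induction n, hn using Nat.le_induction with
  | base => exact hbase
  | succ n _ ih =>
    calc 2 ^ (24 * D) * 16 ^ (n + 1 + C) = 2 ^ (24 * D) * 16 ^ (n + C) * 16 := by ring
      _ ≤ 30030 ^ D * (q ^ D) ^ n * q ^ D := Nat.mul_le_mul ih hD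
      _ = _ := by ring

/-- For `w ≤ (n + C) / D`, the `D`-th power of the hypothesis of `Good.of_bound` follows from `pow_growth`. -/
lemma Good.of_D {q n D C : ℕ} (hq : Fintype.card F = q) (hn : Module.finrank F K = n)
    (hn100 : 100 ≤ n) (hD0 : D ≠ 0) (hw : D * (pset F n).card ≤ n + C) (hD : 16 ≤ q ^ D)
    (hbase : 2 ^ (24 * D) * 16 ^ (100 + C) ≤ 30030 ^ D * (q ^ D) ^ 100) : Good F K := by
  have hq1 : 1 < q := hq ▸ Fintype.one_lt_card
  have hc : 0 < (q - 1) * n.gcd (q - 1) :=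
    Nat.mul_pos (by omega) (Nat.gcd_pos_of_pos_left _ (by omega))
  apply Good.of_bound hq hn
  have : 2 ^ 24 * 16 ^ (pset F n).card ≤ 30030 * q ^ n := by
    rw [← Nat.pow_le_pow_iff_left hD0]
    calc (2 ^ 24 * 16 ^ (pset F n).card) ^ D = 2 ^ (24 * D) * 16 ^ (D * (pset F n).card) := by
          rw [mul_pow, ← pow_mul, ← pow_mul, mul_comm D]
      _ ≤ 2 ^ (24 * D) * 16 ^ (n + C) :=
          Nat.mul_le_mul_left _ (Nat.pow_le_pow_right (by norm_num) hw)
      _ ≤ 30030 ^ D * (q ^ D) ^ n := pow_growth hn100 hD hbase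
      _ = (30030 * q ^ n) ^ D := by rw [mul_pow, ← pow_mul, ← pow_mul, mul_comm D]
  refine this.trans (Nat.mul_le_mul_right _ ?_)
  exact Nat.le_mul_of_pos_right _ hc

/-- The number of factors of degree less than `D` is bounded in terms of `q` only, which gives
`D w ≤ n + C` with a constant `C`, for a `D` such that `16 ≤ q ^ D`. -/
lemma Good.of_large_degree {q n : ℕ} (hq : Fintype.card F = q) (hn : Module.finrank F K = n)
    (hn100 : 100 ≤ n) (hq32 : q < 32) : Good F K := by
  obtain ⟨p, m, k, n0, hp, hm, hcard, hnk, hn0, hF, hset⟩ := exists_param F (n := n) (by omega)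
  have hq1 : 1 < q := hq ▸ Fintype.one_lt_card
  have hn0n : n0 ≤ n := Nat.le_of_dvd (by omega) ⟨p ^ k, by rw [hnk, mul_comm]⟩
  obtain ⟨h1, h2, h3, h4, h5⟩ := Nd_rel hF hq
  have hg : ∀ d, 0 < d → n0.gcd (q ^ d - 1) ≤ q ^ d - 1 := fun d hd =>
    Nat.le_of_dvd (by have := Nat.one_lt_pow hd.ne' hq1; omega) (Nat.gcd_dvd_right _ _)
  have g1 := hg 1 (by norm_num)
  have g2 := hg 2 (by norm_num)
  have g3 := hg 3 (by norm_num)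
  have g4 := hg 4 (by norm_num)
  have g5 := hg 5 (by norm_num)
  rw [pow_one] at g1
  have key : ∀ D, D * (pset F n).card ≤ n0 + ∑ d ∈ Finset.Ico 1 D, (D - d) * Nd F n0 d := by
    intro D; rw [hset]; exact card_pset_bound hF D
  rcases Nat.lt_or_ge q 5 with h | h
  · have k3 := key 3
    have k4 := key 4
    have k6 := key 6
    simp only [Finset.sum_Ico_eq_sum_range, Finset.sum_range_succ, Finset.sum_range_zero,
      Nat.reduceAdd, Nat.reduceSub, Nat.add_zero, zero_add] at k3 k4 k6
    interval_cases q
    · exact Good.of_D (D := 6) (C := 27) hq hn hn100 (by norm_num) (by omega) (by norm_num) (by norm_num)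
    · exact Good.of_D (D := 4) (C := 22) hq hn hn100 (by norm_num) (by omega) (by norm_num) (by norm_num)
    · exact Good.of_D (D := 3) (C := 13) hq hn hn100 (by norm_num) (by omega) (by norm_num) (by norm_num)
  · have k2 := key 2
    simp only [Finset.sum_Ico_eq_sum_range, Finset.sum_range_succ, Finset.sum_range_zero,
      Nat.reduceAdd, Nat.reduceSub, Nat.add_zero, zero_add] at k2
    refine Good.of_D (D := 2) (C := q - 1) hq hn hn100 (by norm_num) (by omega) (by nlinarith) ?_
    clear hq hcard h1 h2 h3 h4 h5 hg g1 g2 g3 g4 g5 key k2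
    interval_cases q <;> norm_num

/-- Primes below `64`. -/
def smallPrimes : List ℕ := [2, 3, 5, 7, 11, 13, 17, 19, 23, 29, 31, 37, 41, 43, 47, 53, 59, 61]

/-- An upper bound for the number of primes dividing `Q`: those below `64` are counted exactly, and
the remaining cofactor has at most `log₂ / 6` prime divisors `≥ 64 = 2 ^ 6`. -/
def omegaB (Q : ℕ) : ℕ :=
  (smallPrimes.filter (fun p => Q % p == 0)).length +
    Nat.log2 (Q / (smallPrimes.filter (fun p => Q % p == 0)).prod) / 6

/-- An upper bound for the number of monic irreducible factors of `X ^ n0 - 1` over a field with `q`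
elements, with `q` coprime to `n0`: factors of degree less than `6` are counted exactly, and
the others contribute at least `6` each to the total degree `n0`. -/
def wB (q n0 : ℕ) : ℕ :=
  let g1 := n0.gcd (q - 1)
  let g2 := n0.gcd (q ^ 2 - 1)
  let g3 := n0.gcd (q ^ 3 - 1)
  let g4 := n0.gcd (q ^ 4 - 1)
  let g5 := n0.gcd (q ^ 5 - 1)
  (n0 + 5 * g1 + 4 * ((g2 - g1) / 2) + 3 * ((g3 - g1) / 3) + 2 * ((g4 - g2) / 4) + (g5 - g1) / 5) / 6

/-- Numerical form of the hypothesis of `Good.of_card`. -/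
def numTest (q n n0 : ℕ) : Bool :=
  Nat.ble ((2 ^ omegaB ((q ^ n - 1) / ((q - 1) * n.gcd (q - 1))) - 1) ^ 2 * (2 ^ wB q n0 - 1) ^ 2 + 1) (q ^ n)

/-- Pairs `(p, q)` with `q < 32` a power of the prime `p`. -/
def primePowers : List (ℕ × ℕ) :=
  [(2, 2), (2, 4), (2, 8), (2, 16), (3, 3), (3, 9), (3, 27), (5, 5), (5, 25), (7, 7), (11, 11), (13, 13),
    (17, 17), (19, 19), (23, 23), (29, 29), (31, 31)]

/-- Pairs `(q, n)` where the counting criterion `numTest` is not strong enough. -/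
def exceptions : List (ℕ × ℕ) :=
  [(2, 3), (2, 6), (2, 15), (3, 4), (3, 8), (5, 4), (5, 8), (7, 6)]

/-- The numerical criterion for the degree `n = p ^ k * n0`, when it is in the relevant range. -/
def caseTest (pq : ℕ × ℕ) (k n0 : ℕ) : Bool :=
  n0 % pq.1 == 0 || Nat.blt (pq.1 ^ k * n0) 3 || Nat.ble 100 (pq.1 ^ k * n0) ||
    decide ((pq.2, pq.1 ^ k * n0) ∈ exceptions) || numTest pq.2 (pq.1 ^ k * n0) n0

lemma caseTest_all :
    primePowers.all (fun pq => (List.range 7).all fun k => (List.range 100).all fun n0 =>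
      caseTest pq k n0) = true := by
  decide +kernel

lemma numTest_all {pq : ℕ × ℕ} (hpq : pq ∈ primePowers) {k : ℕ} (hk : k < 7) {n0 : ℕ} (h0 : n0 < 100)
    (h1 : n0 % pq.1 ≠ 0) (h2 : 3 ≤ pq.1 ^ k * n0) (h3 : pq.1 ^ k * n0 < 100)
    (h4 : (pq.2, pq.1 ^ k * n0) ∉ exceptions) : numTest pq.2 (pq.1 ^ k * n0) n0 = true := by
  have h := caseTest_all
  rw [List.all_eq_true] at h
  have h' := h pq hpq
  rw [List.all_eq_true] at h'
  have h'' := h' k (List.mem_range.2 hk)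
  rw [List.all_eq_true] at h''
  have ht := h'' n0 (List.mem_range.2 h0)
  simp only [caseTest, Bool.or_eq_true, beq_iff_eq, Nat.blt_eq, Nat.ble_eq, decide_eq_true_eq] at ht
  rcases ht with (((ht | ht) | ht) | ht) | ht
  · exact absurd ht h1
  · omega
  · omega
  · exact absurd ht h4
  · exact ht

lemma card_le_omegaB {Q : ℕ} (hQ : Q ≠ 0) : Q.primeFactors.card ≤ omegaB Q := by
  have hfil : (smallPrimes.filter (fun p => Q % p == 0)).toFinset = Q.primeFactors.filter (· < 64) := by
    ext p
    simp only [List.mem_toFinset, List.mem_filter, beq_iff_eq, Finset.mem_filter, Nat.mem_primeFactors]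
    constructor
    · rintro ⟨h1, h2⟩
      refine ⟨⟨?_, Nat.dvd_of_mod_eq_zero h2, hQ⟩, ?_⟩
      · simp only [smallPrimes, List.mem_cons, List.not_mem_nil, or_false] at h1
        rcases h1 with rfl | rfl | rfl | rfl | rfl | rfl | rfl | rfl | rfl | rfl | rfl | rfl | rfl | rfl |
          rfl | rfl | rfl | rfl <;> norm_num
      · simp only [smallPrimes, List.mem_cons, List.not_mem_nil, or_false] at h1
        omega
    · rintro ⟨⟨h1, h2, -⟩, h3⟩
      refine ⟨?_, Nat.mod_eq_zero_of_dvd h2⟩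
      clear h2
      have h2 := h1.two_le
      interval_cases p <;> first | decide | (exfalso; revert h1; norm_num)
  have hnd : (smallPrimes.filter (fun p => Q % p == 0)).Nodup :=
    List.Nodup.filter _ (by decide)
  have hcard : (smallPrimes.filter (fun p => Q % p == 0)).length = (Q.primeFactors.filter (· < 64)).card := by
    rw [← hfil, List.toFinset_card_of_nodup hnd]
  have hprod : (smallPrimes.filter (fun p => Q % p == 0)).prod = ∏ p ∈ Q.primeFactors.filter (· < 64), p := by
    rw [← hfil, List.prod_toFinset _ hnd, List.map_id']
  rw [omegaB, hcard, hprod]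
  have hb := omega_bound (B := 64) hQ _ rfl
  set S := Q.primeFactors.filter (· < 64)
  have h64 : 2 ^ (6 * (Q.primeFactors.card - S.card)) ≤ Q / ∏ p ∈ S, p := by
    rw [pow_mul]; exact hb
  have hne : Q / ∏ p ∈ S, p ≠ 0 := by
    have : 0 < 2 ^ (6 * (Q.primeFactors.card - S.card)) := by positivity
    omega
  have := (Nat.le_log2 hne).2 h64
  omega

lemma card_le_wB {n0 q : ℕ} (h0 : (n0 : F) ≠ 0) (hq : Fintype.card F = q) :
    (pset F n0).card ≤ wB q n0 := by
  obtain ⟨h1, h2, h3, h4, h5⟩ := Nd_rel h0 hq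
  have k6 := card_pset_bound h0 6
  simp only [Finset.sum_Ico_eq_sum_range, Finset.sum_range_succ, Finset.sum_range_zero,
      Nat.reduceAdd, Nat.reduceSub, Nat.add_zero, zero_add] at k6
  simp only [wB, ← h1, ← h2, ← h3, ← h4, ← h5]
  omega

lemma Good.of_small {q n : ℕ} (hq : Fintype.card F = q) (hn : Module.finrank F K = n)
    (hn3 : 3 ≤ n) (hn100 : n < 100) (hq32 : q < 32) (hex : (q, n) ∉ exceptions) : Good F K := by
  obtain ⟨p, m, k, n0, hp, hm, hcard, hnk, hn0, hF, hset⟩ := exists_param F (n := n) (by omega)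
  have hq1 : 1 < q := hq ▸ Fintype.one_lt_card
  have hn0pos : 0 < n0 := by
    rcases Nat.eq_zero_or_pos n0 with h | h
    · simp [h] at hF
    · exact h
  have hn0n : n0 ≤ n := Nat.le_of_dvd (by omega) ⟨p ^ k, by rw [hnk, mul_comm]⟩
  have hk : k < 7 := by
    by_contra h
    have h2 : 2 ^ 7 ≤ p ^ k := (Nat.pow_le_pow_left hp.two_le 7).trans
      (Nat.pow_le_pow_right hp.pos (not_lt.1 h))
    have : p ^ k ≤ n := hnk ▸ Nat.le_mul_of_pos_right _ hn0pos
    omega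
  have hpq : (p, q) ∈ primePowers := by
    have hqp : q = p ^ m := hq.symm.trans hcard
    have hm5 : m < 5 := by
      by_contra h
      have h2 : 2 ^ 5 ≤ p ^ m := (Nat.pow_le_pow_left hp.two_le 5).trans
        (Nat.pow_le_pow_right hp.pos (not_lt.1 h))
      omega
    have hp32 : p < 32 := lt_of_le_of_lt (Nat.le_self_pow hm.ne' p) (hqp ▸ hq32)
    have hp2 := hp.two_le
    rw [hqp] at hq32 ⊢
    clear hqp hcard hnk hn0
    interval_cases p <;> first
      | (revert hp; norm_num; done)
      | (interval_cases m <;> first | decide | (revert hq32; norm_num))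
  have ht := numTest_all (pq := (p, q)) hpq hk (n0 := n0) (by omega)
    (fun h => hn0 (Nat.dvd_of_mod_eq_zero h)) (hnk ▸ hn3) (hnk ▸ hn100) (hnk ▸ hex)
  rw [← hnk] at ht
  have ht' := Nat.le_of_ble_eq_true ht
  dsimp only at ht'
  have hQ := QQ_mul q n hq1
  have hqn : 1 < q ^ n := Nat.one_lt_pow (by omega) hq1
  have hQ0 : QQ q n ≠ 0 := by
    intro h0; rw [h0, zero_mul] at hQ; omega
  have hc : 0 < (q - 1) * n.gcd (q - 1) :=
    Nat.mul_pos (by omega) (Nat.gcd_pos_of_pos_left _ (by omega))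
  rw [← hQ, Nat.mul_div_cancel _ hc] at ht'
  apply Good.of_card hq hn
  refine lt_of_le_of_lt ?_ ht'
  have h1 := card_le_omegaB hQ0
  have h2 := card_le_wB hF hq
  rw [hset]
  gcongr <;> norm_num
end

/-! ### Exceptional pairs handled by the sieve -/

section
variable {F K : Type*} [Field F] [Fintype F] [Field K] [Fintype K] [Algebra F K]

/-- A numerical form of the sieve `Good.of_sieve`: the set `B` of unsieved polynomials has `b` elements,
and there are at most `t` sieved ones, all of degree at least `e`. The criterion is monotone in
`∑ q ^ (-deg P)` over the sieved `P`, a sum which is at most `t / q ^ e`. -/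
lemma Good.special {q n : ℕ} (hq : Fintype.card F = q) (hn : Module.finrank F K = n)
    (A A' : Finset ℕ) (hA : A ∪ A' = (QQ q n).primeFactors) (dA : Disjoint A A') (b t e : ℕ)
    (hb : 0 < b) (hB : ∃ B ⊆ pset F n, B.card = b ∧ ∀ P ∈ pset F n, P ∉ B → e ≤ P.natDegree)
    (hw : (pset F n).card ≤ b + t) (r : ℝ) (hr0 : 0 ≤ r) (hr : r ^ 2 ≤ (q : ℝ) ^ n)
    (hδ : 0 ≤ 1 - ∑ l ∈ A', (l : ℝ)⁻¹ - t * ((q : ℝ) ^ e)⁻¹)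
    (hU : ((2 : ℝ) ^ A.card - 1) * 2 ^ b ≤ r - (2 ^ A.card - 1) * (2 ^ b - 1))
    (hmain : (∑ l ∈ A', (1 - (l : ℝ)⁻¹)) * (2 ^ A.card * (2 ^ b - 1)) +
      (t - t * ((q : ℝ) ^ e)⁻¹) * ((2 ^ A.card - 1) * 2 ^ b) <
        (1 - ∑ l ∈ A', (l : ℝ)⁻¹ - t * ((q : ℝ) ^ e)⁻¹) * (r - (2 ^ A.card - 1) * (2 ^ b - 1))) :
    Good F K := by
  classical
  obtain ⟨B, hBs, hBc, hBd⟩ := hB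
  have hq1 : (1 : ℝ) ≤ q := by
    have : 1 < q := hq ▸ Fintype.one_lt_card
    exact_mod_cast this.le
  set B' := pset F n \ B with hB'
  have ht : (B'.card : ℝ) ≤ t := by
    have : B'.card ≤ t := by rw [hB', Finset.card_sdiff_of_subset hBs]; omega
    exact_mod_cast this
  set x := ∑ P ∈ B', ((q : ℝ) ^ P.natDegree)⁻¹ with hx
  set y := ((q : ℝ) ^ e)⁻¹ with hy
  have hy0 : 0 ≤ y := by positivity
  have hxy : x ≤ B'.card * y := by
    rw [hx, ← nsmul_eq_mul]
    refine Finset.sum_le_card_nsmul _ _ _ fun P hP => ?_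
    rw [hB', Finset.mem_sdiff] at hP
    exact inv_anti₀ (by positivity) (pow_le_pow_right₀ hq1 (hBd P hP.1 hP.2))
  have hxt : x ≤ t * y := hxy.trans (mul_le_mul_of_nonneg_right ht hy0)
  have hy1 : y ≤ 1 := inv_le_one_of_one_le₀ (one_le_pow₀ hq1)
  have hR : r ≤ √((q : ℝ) ^ n) := Real.le_sqrt_of_sq_le hr
  have h2a : (0 : ℝ) ≤ 2 ^ A.card - 1 := sub_nonneg.2 (one_le_pow₀ (by norm_num))
  have h2b : (0 : ℝ) ≤ 2 ^ b - 1 := sub_nonneg.2 (one_le_pow₀ (by norm_num))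
  have hsub : ∑ P ∈ B', (1 - ((q : ℝ) ^ P.natDegree)⁻¹) = B'.card - x := by
    rw [Finset.sum_sub_distrib, Finset.sum_const, nsmul_eq_mul, mul_one]
  refine Good.of_sieve hq hn A A' B B' hA (Finset.union_sdiff_of_subset hBs) dA
    Finset.disjoint_sdiff (Finset.card_pos.1 (by omega)) (1 - ∑ l ∈ A', (l : ℝ)⁻¹ - x)
    (by linarith) rfl ?_
  rw [hsub, hBc]
  set s := ∑ l ∈ A', (l : ℝ)⁻¹
  set U := ((2 : ℝ) ^ A.card - 1) * 2 ^ b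
  have hU0 : 0 ≤ U := by positivity
  set V := ((2 : ℝ) ^ A.card - 1) * (2 ^ b - 1)
  -- replacing `x` by its upper bound `t * y` costs `(t * y - x) * U` on the left and gains at least
  -- that much on the right
  have e1 : (B'.card - x) * U ≤ (t - t * y) * U + (t * y - x) * U := by nlinarith
  have e2 : (t * y - x) * U ≤ (t * y - x) * (r - V) :=
    mul_le_mul_of_nonneg_left hU (by linarith)
  have e3 : (1 - s - x) * (r - V) ≤ (1 - s - x) * (√((q : ℝ) ^ n) - V) :=
    mul_le_mul_of_nonneg_left (by linarith) (by linarith)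
  nlinarith

lemma card_low {n0 : ℕ} (h0 : 0 < n0) (e : ℕ) :
    ((pset F n0).filter (fun P => P.natDegree < e)).card = ∑ d ∈ Finset.Ico 1 e, Nd F n0 d := by
  classical
  rw [Finset.card_eq_sum_card_fiberwise (f := natDegree) (t := Finset.Ico 1 e)]
  · refine Finset.sum_congr rfl fun d hd => ?_
    rw [Nd, Finset.filter_filter]
    congr 1
    ext P
    simp only [Finset.mem_filter, Finset.mem_Ico] at hd ⊢
    constructor
    · rintro ⟨h1, -, h2⟩; exact ⟨h1, h2⟩
    · rintro ⟨h1, h2⟩; exact ⟨h1, by omega, h2⟩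
  · intro P hP
    have hPe := Finset.mem_filter.1 (Finset.mem_coe.1 hP)
    have := ((mem_pset h0).1 hPe.1).1.natDegree_pos
    exact Finset.mem_coe.2 (Finset.mem_Ico.2 ⟨this, hPe.2⟩)

/-- The irreducible factors of degree less than `e` form an admissible unsieved set. -/
lemma low_set {n n0 e b : ℕ} (h0 : 0 < n0) (hset : pset F n = pset F n0)
    (hc : ∑ d ∈ Finset.Ico 1 e, Nd F n0 d = b) :
    ∃ B ⊆ pset F n, B.card = b ∧ ∀ P ∈ pset F n, P ∉ B → e ≤ P.natDegree := by
  rw [hset]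
  refine ⟨_, Finset.filter_subset _ _, (card_low h0 e).trans hc, fun P hP h => ?_⟩
  by_contra h'
  exact h (Finset.mem_filter.2 ⟨hP, not_le.1 h'⟩)

lemma natCast_ne_zero' {q n0 : ℕ} (hq : Fintype.card F = q) (h : n0.Coprime q) : (n0 : F) ≠ 0 := by
  intro h0
  have hq0 : (q : F) = 0 := by rw [← hq]; exact FiniteField.cast_card_eq_zero F
  have h1 := congrArg (fun z : ℤ => (z : F)) (Nat.gcd_eq_gcd_ab n0 q)
  rw [Nat.Coprime] at h
  rw [h] at h1
  push_cast at h1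
  rw [h0, hq0] at h1
  simp at h1

lemma good_2_3 (hq : Fintype.card F = 2) (hn : Module.finrank F K = 3) : Good F K := by
  have h0 := natCast_ne_zero' (n0 := 3) hq (by norm_num)
  obtain ⟨h1, h2, -⟩ := Nd_rel h0 hq
  norm_num at h1 h2
  have k := card_pset_bound h0 2
  simp [h1] at k
  refine Good.special hq hn ∅ {7} (by decide +kernel) (by simp) 1 1 2 (by norm_num)
    (low_set (by norm_num) rfl (by simp [h1])) (by omega) 2 ?_ ?_ ?_ ?_ ?_ <;> norm_num

lemma good_2_6 (hq : Fintype.card F = 2) (hn : Module.finrank F K = 6) : Good F K := by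
  have h0 := natCast_ne_zero' (n0 := 3) hq (by norm_num)
  obtain ⟨h1, h2, -⟩ := Nd_rel h0 hq
  norm_num at h1 h2
  have k := card_pset_bound h0 2
  simp [h1] at k
  have h2p : Fact (Nat.Prime 2) := ⟨Nat.prime_two⟩
  have : CharP F 2 := charP_of_card_eq_prime hq
  have hset : pset F 6 = pset F 3 := pset_pow 2 1 3
  refine Good.special hq hn {3} {7} (by decide +kernel) (by simp) 1 1 2 (by norm_num)
    (low_set (by norm_num) hset (by simp [h1])) (by rw [hset]; omega) 8 ?_ ?_ ?_ ?_ ?_ <;> norm_num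

lemma good_2_15 (hq : Fintype.card F = 2) (hn : Module.finrank F K = 15) : Good F K := by
  have h0 := natCast_ne_zero' (n0 := 15) hq (by norm_num)
  obtain ⟨h1, h2, h3, -⟩ := Nd_rel h0 hq
  norm_num at h1 h2 h3
  have k := card_pset_bound h0 4
  have h2' : Nd F 15 2 = 1 := by omega
  have h3' : Nd F 15 3 = 0 := by omega
  simp [Finset.sum_Ico_eq_sum_range, Finset.sum_range_succ, h1, h2', h3'] at k
  refine Good.special hq hn {7} {31, 151} (by decide +kernel) (by simp) 2 3 3 (by norm_num)
    (low_set (by norm_num) rfl (by simp [Finset.sum_Ico_eq_sum_range, Finset.sum_range_succ, h1, h2'])) (by omega) 181 ?_ ?_ ?_ ?_ ?_ <;> norm_num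

lemma good_3_8 (hq : Fintype.card F = 3) (hn : Module.finrank F K = 8) : Good F K := by
  have h0 := natCast_ne_zero' (n0 := 8) hq (by norm_num)
  obtain ⟨h1, h2, -⟩ := Nd_rel h0 hq
  norm_num at h1 h2
  have k := card_pset_bound h0 2
  simp [h1] at k
  refine Good.special hq hn {2} {5, 41} (by decide +kernel) (by simp) 2 3 2 (by norm_num)
    (low_set (by norm_num) rfl (by simp [h1])) (by omega) 81 ?_ ?_ ?_ ?_ ?_ <;> norm_num

lemma good_5_8 (hq : Fintype.card F = 5) (hn : Module.finrank F K = 8) : Good F K := by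
  have h0 := natCast_ne_zero' (n0 := 8) hq (by norm_num)
  obtain ⟨h1, h2, -⟩ := Nd_rel h0 hq
  norm_num at h1 h2
  have k := card_pset_bound h0 2
  simp [h1] at k
  refine Good.special hq hn {2, 3} {13, 313} (by decide +kernel) (by simp) 4 2 2 (by norm_num)
    (low_set (by norm_num) rfl (by simp [h1])) (by omega) 625 ?_ ?_ ?_ ?_ ?_ <;> norm_num

/-- Any `b` irreducible factors form an admissible unsieved set for the degree bound `1`. -/
lemma any_set {n b : ℕ} (hn : 0 < n) (hc : b ≤ (pset F n).card) :
    ∃ B ⊆ pset F n, B.card = b ∧ ∀ P ∈ pset F n, P ∉ B → 1 ≤ P.natDegree := by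
  obtain ⟨B, hB, hb⟩ := Finset.exists_subset_card_eq hc
  exact ⟨B, hB, hb, fun P hP _ => ((mem_pset hn).1 hP).1.natDegree_pos⟩

lemma good_5_4 (hq : Fintype.card F = 5) (hn : Module.finrank F K = 4) : Good F K := by
  have h0 := natCast_ne_zero' (n0 := 4) hq (by norm_num)
  obtain ⟨h1, -⟩ := Nd_rel h0 hq
  norm_num at h1
  have k := card_pset_bound h0 2
  have hl : Nd F 4 1 ≤ (pset F 4).card := Finset.card_le_card (Finset.filter_subset _ _)
  simp [h1] at k hl
  refine Good.special hq hn {3} {13} (by decide +kernel) (by simp) 1 3 1 (by norm_num)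
    (any_set (by norm_num) (by omega)) (by omega) 25 ?_ ?_ ?_ ?_ ?_ <;> norm_num

lemma good_7_6 (hq : Fintype.card F = 7) (hn : Module.finrank F K = 6) : Good F K := by
  have h0 := natCast_ne_zero' (n0 := 6) hq (by norm_num)
  obtain ⟨h1, -⟩ := Nd_rel h0 hq
  norm_num at h1
  have k := card_pset_bound h0 2
  have hl : Nd F 6 1 ≤ (pset F 6).card := Finset.card_le_card (Finset.filter_subset _ _)
  simp [h1] at k hl
  refine Good.special hq hn {2} {19, 43} (by decide +kernel) (by simp) 4 2 1 (by norm_num)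
    (any_set (by norm_num) (by omega)) (by omega) 343 ?_ ?_ ?_ ?_ ?_ <;> norm_num
end

/-! ### Degrees one and two, the field with 81 elements, and conclusion -/

section
variable {F K : Type*} [Field F] [Fintype F] [Field K] [Fintype K] [Algebra F K]

lemma NB_iff {n : ℕ} (hn : Module.finrank F K = n) (w : K) :
    NB F K w ↔ LinearIndependent F (fun i : Fin n => w ^ Fintype.card F ^ (i : ℕ)) := by
  subst hn; rfl

lemma exists_unit_gen (K : Type*) [Field K] [Fintype K] :
    ∃ g : K, g ≠ 0 ∧ orderOf g = Fintype.card K - 1 := by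
  obtain ⟨g, hg⟩ := IsCyclic.exists_generator (α := Kˣ)
  refine ⟨g, g.ne_zero, ?_⟩
  rw [orderOf_units, orderOf_eq_card_of_forall_mem_zpowers hg, Nat.card_units,
    Nat.card_eq_fintype_card]

lemma good_one (hn : Module.finrank F K = 1) : Good F K := by
  refine Good.of_card rfl hn ?_
  have h1 : QQ (Fintype.card F) 1 = 1 := by simp [QQ]
  rw [h1]
  simpa using Fintype.card_pos

/-- In a quadratic extension every generator `η` of `Kˣ` is normal: otherwise `η ^ (q - 1)` lies in `F`,
and the order of `η` divides `(q - 1) ^ 2 < q ^ 2 - 1`. -/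
lemma good_two (hn : Module.finrank F K = 2) : Good F K := by
  obtain ⟨g, hg0, hg⟩ := exists_unit_gen K
  refine ⟨g, hg0, by rw [hg, card_K F K], ?_⟩
  rw [NB_iff hn, Fintype.linearIndependent_iff]
  intro c hc
  rw [card_K F K, hn] at hg
  obtain ⟨r, hr⟩ : ∃ r, Fintype.card F = r + 1 :=
    ⟨Fintype.card F - 1, by have := Fintype.card_pos (α := F); omega⟩
  have hr0 : 0 < r := by have := Fintype.one_lt_card (α := F); omega
  rw [Fin.sum_univ_two] at hc
  simp only [Fin.val_zero, Fin.val_one, pow_zero, pow_one] at hc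
  have h1 : c 1 = 0 := by
    by_contra h1
    have h2 : g ^ r = algebraMap F K (-(c 0) / c 1) := by
      have h1' : algebraMap F K (c 1) ≠ 0 := by simpa using h1
      rw [Algebra.smul_def, Algebra.smul_def, hr, pow_succ] at hc
      rw [map_div₀, map_neg, eq_div_iff h1']
      apply mul_right_cancel₀ hg0
      linear_combination hc
    have h3 : -(c 0) / c 1 ≠ 0 := by
      intro h
      rw [h, map_zero] at h2
      exact pow_ne_zero r hg0 h2
    have h4 : g ^ (r * r) = 1 := by
      rw [pow_mul, h2, ← map_pow]
      have := FiniteField.pow_card_sub_one_eq_one _ h3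
      rw [hr, Nat.add_sub_cancel] at this
      rw [this, map_one]
    have h5 := Nat.le_of_dvd (by positivity) (orderOf_dvd_of_pow_eq_one h4)
    rw [hg, hr, Nat.sub_le_iff_le_add] at h5
    nlinarith
  rw [h1, zero_smul, add_zero] at hc
  have h0 : c 0 = 0 := (smul_eq_zero.1 hc).resolve_right hg0
  intro i
  fin_cases i
  · exact h0
  · exact h1

/-- The field with `81` elements contains a root `s` of `X ^ 4 + X ^ 2 - 1`: of the
two primitive eighth roots of unity `±g ^ 10`, with `g` a generator of
`Kˣ`, exactly one is a root of `X ^ 2 + X - 1`, and both are squares. -/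
lemma exists_s (h3 : (3 : K) = 0) (hK : Fintype.card K = 81) : ∃ s : K, s ^ 4 + s ^ 2 - 1 = 0 := by
  obtain ⟨g, hg0, hg⟩ := exists_unit_gen K
  rw [hK] at hg
  have h40 : g ^ 40 = -1 := by
    have h1 : (g ^ 40) ^ 2 = 1 := by
      rw [← pow_mul, show 40 * 2 = orderOf g by rw [hg], pow_orderOf_eq_one]
    rcases mul_self_eq_one_iff.1 ((sq _).symm.trans h1) with h | h
    · have := Nat.le_of_dvd (by norm_num) (orderOf_dvd_of_pow_eq_one h)
      rw [hg] at this
      omega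
    · exact h
  have hf : (g ^ 20 + g ^ 10 - 1) * (g ^ 20 - g ^ 10 - 1) = 0 := by
    linear_combination h40 - g ^ 20 * h3
  rcases mul_eq_zero.1 hf with h | h
  · exact ⟨g ^ 5, by linear_combination h⟩
  · exact ⟨g ^ 25, by linear_combination h + (g ^ 60 - g ^ 20 + g ^ 10) * h40⟩

/-- Both values `a + b * s + c * s ^ 2 + d * s ^ 3` and `a - b * s + c * s ^ 2 - d * s ^ 3` vanish,
because the square of the Frobenius fixes `F` and sends `s` to `-s`. Since `s ^ 2` is not in `F`,
this forces all coefficients to vanish. -/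
lemma indep_s (hF : Fintype.card F = 3) {s : K} (h3 : (3 : K) = 0) (hs : s ^ 4 + s ^ 2 - 1 = 0)
    {a b c d : F} (h : algebraMap F K a + algebraMap F K b * s + algebraMap F K c * s ^ 2 +
      algebraMap F K d * s ^ 3 = 0) : a = 0 ∧ b = 0 ∧ c = 0 ∧ d = 0 := by
  let φ := FiniteField.frobeniusAlgHom F K
  have hφ : ∀ x, φ x = x ^ 3 := fun x => by
    rw [← hF]; rfl
  have hs0 : s ≠ 0 := by
    rintro rfl
    norm_num at hs
  have hs9 : φ (φ s) = -s := by
    rw [hφ, hφ]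
    linear_combination ((2) * s ^ 1 + (-1) * s ^ 3 + (1) * s ^ 5) * hs + ((1) * s ^ 1 + (-1) * s ^ 3) * h3
  have h' := congrArg (fun x => φ (φ x)) h
  simp only [map_add, map_mul, map_pow, AlgHom.commutes, hs9, map_zero] at h'
  have key : ∀ u v : F, algebraMap F K u + algebraMap F K v * s ^ 2 = 0 → u = 0 ∧ v = 0 := by
    intro u v huv
    have hv : v = 0 := by
      by_contra hv
      have hv' : algebraMap F K v ≠ 0 := by simpa using hv
      have hfix : s ^ 2 = algebraMap F K (-u / v) := by
        rw [map_div₀, map_neg, eq_div_iff hv']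
        linear_combination huv
      have h6 : (s ^ 2) ^ 3 = s ^ 2 := by
        rw [hfix, ← hφ, AlgHom.commutes]
      have h4 : s ^ 4 = 1 := by
        apply mul_left_cancel₀ (pow_ne_zero 2 hs0)
        linear_combination h6
      exact pow_ne_zero 2 hs0 (by linear_combination hs - h4)
    rw [hv, map_zero, zero_mul, add_zero] at huv
    exact ⟨by simpa using huv, hv⟩
  have h1 := key a c (by linear_combination (-1) * h - h' + (algebraMap F K a + algebraMap F K c * s ^ 2) * h3)
  have h2 := key b d (by
    apply mul_left_cancel₀ hs0
    linear_combination (-1) * h + h' + (algebraMap F K b * s + algebraMap F K d * s ^ 3) * h3)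
  exact ⟨h1.1, h2.1, h1.2, h2.2⟩

/-- The primitive normal element is `s ^ 2 + s`. -/
lemma good_3_4 (hF : Fintype.card F = 3) (hn : Module.finrank F K = 4) : Good F K := by
  have hK : Fintype.card K = 81 := by rw [card_K F K, hF, hn]; norm_num
  have h3F : (3 : F) = 0 := by
    have := FiniteField.cast_card_eq_zero F
    rw [hF] at this
    exact_mod_cast this
  have h3 : (3 : K) = 0 := by
    have := congrArg (algebraMap F K) h3F
    rwa [map_ofNat, map_zero] at this
  obtain ⟨s, hs⟩ := exists_s h3 hK
  set η := s ^ 2 + s with hη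
  have e3 : η ^ 3 = s ^ 3 - s ^ 2 - 1 := by
    linear_combination ((2) * s ^ 0 + (3) * s ^ 1 + (1) * s ^ 2) * hs + ((1) * s ^ 0 + (1) * s ^ 1 + (-1) * s ^ 3) * h3
  have e9 : η ^ 9 = s ^ 2 - s := by
    rw [show η ^ 9 = (η ^ 3) ^ 3 by ring, e3]
    linear_combination ((-5) * s ^ 0 + (5) * s ^ 1 + (-1) * s ^ 2 + (2) * s ^ 3 + (-3) * s ^ 4 + (1) * s ^ 5) * hs + ((-2) * s ^ 0 + (2) * s ^ 1) * h3
  have e27 : η ^ 27 = -s ^ 3 - s ^ 2 - 1 := by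
    rw [show η ^ 27 = (η ^ 9) ^ 3 by ring, e9]
    linear_combination ((2) * s ^ 0 + (-3) * s ^ 1 + (1) * s ^ 2) * hs + ((1) * s ^ 0 + (-1) * s ^ 1 + (1) * s ^ 3) * h3
  have e4 : η ^ 4 = s ^ 3 - s ^ 2 := by
    linear_combination ((-3) * s ^ 0 + (5) * s ^ 2 + (4) * s ^ 3 + (1) * s ^ 4) * hs + ((-1) * s ^ 0 + (3) * s ^ 2 + (1) * s ^ 3) * h3
  have e8 : η ^ 8 = s ^ 2 + s - s ^ 3 := by
    rw [show η ^ 8 = (η ^ 4) ^ 2 by ring, e4]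
    linear_combination ((-2) * s ^ 1 + (1) * s ^ 2) * hs + ((-1) * s ^ 1 + (1) * s ^ 3) * h3
  have e16 : η ^ 16 = 1 + s + s ^ 2 + s ^ 3 := by
    rw [show η ^ 16 = (η ^ 8) ^ 2 by ring, e8]
    linear_combination ((-2) * s ^ 0 + (-2) * s ^ 1 + (1) * s ^ 2) * hs + ((-1) * s ^ 0 + (-1) * s ^ 1 + (1) * s ^ 2 + (1) * s ^ 3) * h3
  have e40 : η ^ 40 = -1 := by
    rw [show η ^ 40 = (η ^ 16) ^ 2 * η ^ 8 by ring, e16, e8]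
    have e32 : (1 + s + s ^ 2 + s ^ 3) ^ 2 = s - s ^ 2 - s ^ 3 := by
      linear_combination ((2) * s ^ 0 + (2) * s ^ 1 + (1) * s ^ 2) * hs + ((1) * s ^ 0 + (1) * s ^ 1 + (1) * s ^ 2 + (1) * s ^ 3) * h3
    rw [e32]
    linear_combination ((-4) * s ^ 0 + (1) * s ^ 2) * hs + ((-1) * s ^ 0 + (2) * s ^ 2) * h3
  have h16 : η ^ 16 ≠ 1 := by
    intro h
    have := indep_s (a := (0 : F)) (b := 1) (c := 1) (d := 1) hF h3 hs (by
      rw [map_zero, map_one]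
      linear_combination h - e16)
    exact one_ne_zero this.2.1
  have h40 : η ^ 40 ≠ 1 := by
    intro h
    rw [e40] at h
    have h1 : (1 : K) = 0 := by linear_combination h3 + h
    exact one_ne_zero h1
  have hη0 : η ≠ 0 := by
    intro h
    rw [h] at e40
    norm_num at e40
  refine ⟨η, hη0, ?_, ?_⟩
  · rw [hF, hn]
    norm_num
    refine orderOf_eq_of_pow_and_pow_div_prime (by norm_num) ?_ ?_
    · rw [show η ^ 80 = (η ^ 40) ^ 2 by ring, e40]; norm_num
    · intro p hp hd
      have hp' : p ∣ 2 ^ 4 * 5 := hd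
      rcases (Nat.Prime.dvd_mul hp).1 hp' with h | h
      · rw [(Nat.prime_dvd_prime_iff_eq hp Nat.prime_two).1 (hp.dvd_of_dvd_pow h)]
        exact h40
      · rw [(Nat.prime_dvd_prime_iff_eq hp Nat.prime_five).1 h]
        exact h16
  · rw [NB_iff hn, Fintype.linearIndependent_iff]
    intro c hc
    rw [hF, Fin.sum_univ_four] at hc
    simp only [Fin.val_zero, Fin.val_one, Fin.val_two, show ((3 : Fin 4) : ℕ) = 3 from rfl, pow_zero,
      pow_one, show 3 ^ 2 = 9 from rfl, show 3 ^ 3 = 27 from rfl, e3, e9, e27, Algebra.smul_def] at hc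
    obtain ⟨i1, i2, i3, i4⟩ := indep_s (a := -c 1 - c 3) (b := c 0 - c 2)
      (c := c 0 - c 1 + c 2 - c 3) (d := c 1 - c 3) hF h3 hs (by
        simp only [map_sub, map_add, map_neg]
        linear_combination hc)
    have j1 : c 1 = 0 := by linear_combination c 1 * h3F + i1 - i4
    have j3 : c 3 = 0 := by linear_combination j1 - i4
    have j0 : c 0 = 0 := by linear_combination c 0 * h3F - i2 - i3 - j1 - j3
    have j2 : c 2 = 0 := by linear_combination j0 - i2
    intro i
    fin_cases i
    · exact j0
    · exact j1
    · exact j2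
    · exact j3

theorem good (F K : Type*) [Field F] [Fintype F] [Field K] [Fintype K] [Algebra F K] : Good F K := by
  obtain ⟨n, hn⟩ : ∃ n, Module.finrank F K = n := ⟨_, rfl⟩
  obtain ⟨q, hq⟩ : ∃ q, Fintype.card F = q := ⟨_, rfl⟩
  have hpos : 0 < n := hn ▸ finrank_pos' F K
  rcases Nat.lt_or_ge n 3 with h3 | h3
  · interval_cases n
    · exact good_one hn
    · exact good_two hn
  rcases Nat.lt_or_ge q 32 with h32 | h32
  swap
  · exact Good.of_large_card hq hn h3 h32
  rcases Nat.lt_or_ge n 100 with h100 | h100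
  swap
  · exact Good.of_large_degree hq hn h100 h32
  by_cases hex : (q, n) ∈ exceptions
  · simp only [exceptions, List.mem_cons, Prod.mk.injEq, List.not_mem_nil, or_false] at hex
    rcases hex with ⟨rfl, rfl⟩ | ⟨rfl, rfl⟩ | ⟨rfl, rfl⟩ | ⟨rfl, rfl⟩ | ⟨rfl, rfl⟩ | ⟨rfl, rfl⟩ |
      ⟨rfl, rfl⟩ | ⟨rfl, rfl⟩
    · exact good_2_3 hq hn
    · exact good_2_6 hq hn
    · exact good_2_15 hq hn
    · exact good_3_4 hq hn
    · exact good_3_8 hq hn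
    · exact good_5_4 hq hn
    · exact good_5_8 hq hn
    · exact good_7_6 hq hn
  · exact Good.of_small hq hn h3 h100 h32 hex
end

end PNB

/-- (Primitive Normal Basis Theorem) Every finite field extension `K / F` with `|F| = q`
and `[K : F] = n` has a primitive normal basis: there is `η ∈ K`, `η ≠ 0`, of
multiplicative order `qⁿ − 1` whose conjugates `η, η^q, …, η^{q^{n−1}}` form an
`F`-basis of `K`. -/
theorem stmt15 (F K : Type*) [Field F] [Fintype F] [Field K] [Fintype K] [Algebra F K]
    (n : ℕ) (hn : Module.finrank F K = n) :
    ∃ η : K, η ≠ 0 ∧ orderOf η = Fintype.card F ^ n - 1 ∧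
      LinearIndependent F (fun i : Fin n => η ^ Fintype.card F ^ (i : ℕ)) ∧
      Submodule.span F (Set.range fun i : Fin n => η ^ Fintype.card F ^ (i : ℕ)) = ⊤ := by
  subst hn
  obtain ⟨η, h0, ho, hN⟩ := PNB.good F K
  exact ⟨η, h0, ho, hN, hN.span⟩
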